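/- Let R be a Noetherian ring, 𝔞, 𝔟 ideals with 𝔟 ⊆ Rad(𝔞) and dim R/𝔞 = 1, and M a 𝔟-weakly cofinite R-module. Then H^i_𝔞(M) is 𝔞-weakly cofinite for all i ≥ 0. -/

import Mathlib

open CategoryTheory

universe u

variable (R : Type u) [CommRing R]

/-- The `i`-th Ext module `Ext^i_R(N, M)` of `R`-modules. -/
noncomputable def extModule (i : ℕ) (N M : ModuleCat.{u} R) : ModuleCat.{u} R :=
  ((Ext R (ModuleCat.{u} R) i).obj (Opposite.op N)).obj M

/-- A module is weakly Laskerian if every quotient has finitely many associated primes. -/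
def IsWeaklyLaskerian (M : Type u) [AddCommGroup M] [Module R M] : Prop :=
  ∀ N : Submodule R M, (associatedPrimes R (M ⧸ N)).Finite

/-- `M` is `𝔞`-cofinite: `Supp M ⊆ V(𝔞)` and all `Ext^i_R(R/𝔞, M)` are finitely generated. -/
def IsCofinite (𝔞 : Ideal R) (M : ModuleCat.{u} R) : Prop :=
  Module.support R M ⊆ PrimeSpectrum.zeroLocus (𝔞 : Set R) ∧
    ∀ i : ℕ, Module.Finite R (extModule R i (ModuleCat.of R (R ⧸ 𝔞)) M)

/-- `M` is `𝔞`-weakly cofinite: `Supp M ⊆ V(𝔞)` and all `Ext^i_R(R/𝔞, M)` are weakly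
Laskerian. -/
def IsWeaklyCofinite (𝔞 : Ideal R) (M : ModuleCat.{u} R) : Prop :=
  Module.support R M ⊆ PrimeSpectrum.zeroLocus (𝔞 : Set R) ∧
    ∀ i : ℕ, IsWeaklyLaskerian R (extModule R i (ModuleCat.of R (R ⧸ 𝔞)) M)

/-- The Krull dimension of the support of a module. -/
noncomputable def suppDim (M : Type u) [AddCommGroup M] [Module R M] : WithBot ℕ∞ :=
  Order.krullDim (Module.support R M)

/-- The cohomological dimension `cd(𝔞, M) = sup {i | H^i_𝔞(M) ≠ 0}`, as an element of `ℕ∞`. -/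
noncomputable def cohomologicalDim (𝔞 : Ideal R) (M : ModuleCat.{u} R) : ℕ∞ :=
  ⨆ i ∈ {i : ℕ | Nontrivial ((localCohomology 𝔞 i).obj M)}, (i : ℕ∞)

/-- `p` is an attached prime of `M`: `p` is prime and is the annihilator of a quotient
of `M`. -/
def IsAttachedPrime (M : Type u) [AddCommGroup M] [Module R M] (p : Ideal R) : Prop :=
  p.IsPrime ∧ ∃ N : Submodule R M, p = Module.annihilator R (M ⧸ N)

/-!
Since `Supp (R ⧸ 𝔞) ⊆ V(𝔟)`, weak Laskerianness passes from the modules `Ext^i(R/𝔟, M)` to the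
modules `Ext^i(R/𝔞, M)`. Splitting off the `𝔞`-power torsion `Γ_𝔞(M)` and embedding `M/Γ_𝔞(M)` into
an injective module without `𝔞`-power torsion shifts both `Ext^i(R/𝔞, -)` and `H^i_𝔞` down by one
degree, so it is enough to show: if `X` is `𝔞`-power torsion and `Ext^i(R/𝔞, X)` is weakly Laskerian
for `i = 0, 1`, then it is so for all `i`.

Only finitely many primes over `𝔞` lie in infinitely many primes; let `S` be the complement of their
union. A weakly Laskerian module killed by `𝔞` is finitely generated after localizing at `S`, while
`R_S/𝔞R_S` is zero-dimensional. Hence `X_S` is Artinian by Melkersson's criterion, and by secondary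
representation some `x ∈ 𝔞` makes `(X/xX)_S` finitely generated. Conversely, an `𝔞`-power torsion
module `Y` with `Y_S` finitely generated is weakly Laskerian as soon as `Hom(R/𝔞, Y)` is: modulo
some finitely generated submodule it has finitely many associated primes, each contained in only
finitely many primes. As `x` kills `Ext^i(R/𝔞, X)`, this module is controlled by `ker (x : X → X)`
and the weakly Laskerian module `X/xX`, and Noetherian induction on the annihilator of `X`
concludes.
-/

/-! ### Weakly Laskerian modules and long exact sequences -/

section WeaklyLaskerian

variable {R}
variable {A B C : Type u} [AddCommGroup A] [AddCommGroup B] [AddCommGroup C]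
  [Module R A] [Module R B] [Module R C]

namespace IsWeaklyLaskerian

theorem of_exact {f : A →ₗ[R] B} {g : B →ₗ[R] C} (hfg : Function.Exact f g)
    (hA : IsWeaklyLaskerian R A) (hC : IsWeaklyLaskerian R C) : IsWeaklyLaskerian R B := by
  intro K
  have hinj : Function.Injective (Submodule.mapQ (K.comap f) K f le_rfl) := by
    rw [← LinearMap.ker_eq_bot, Submodule.ker_mapQ, Submodule.mkQ_map_self]
  have hexact : Function.Exact (Submodule.mapQ (K.comap f) K f le_rfl)
      (Submodule.mapQ K (K.map g) g (Submodule.le_comap_map g K)) :=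
    (hfg.exact_mapQ_iff _ _).2 inf_le_right
  exact ((hA _).union (hC _)).subset (associatedPrimes.subset_union_of_exact hinj hexact)

theorem of_subsingleton [Subsingleton A] : IsWeaklyLaskerian R A := by
  intro N
  simp only [associatedPrimes.eq_empty_of_subsingleton, Set.finite_empty]

theorem of_injective (f : A →ₗ[R] B) (hf : Function.Injective f)
    (hB : IsWeaklyLaskerian R B) : IsWeaklyLaskerian R A :=
  of_exact ((LinearMap.exact_zero_iff_injective PUnit.{u + 1} f).2 hf) of_subsingleton hB

theorem of_surjective (f : A →ₗ[R] B) (hf : Function.Surjective f)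
    (hA : IsWeaklyLaskerian R A) : IsWeaklyLaskerian R B :=
  of_exact ((LinearMap.exact_zero_iff_surjective PUnit.{u + 1} f).2 hf) hA of_subsingleton

theorem of_linearEquiv (e : A ≃ₗ[R] B) (hA : IsWeaklyLaskerian R A) : IsWeaklyLaskerian R B :=
  of_surjective e.toLinearMap e.surjective hA

theorem of_finite [IsNoetherianRing R] [Module.Finite R A] : IsWeaklyLaskerian R A :=
  fun _ => associatedPrimes.finite R _

end IsWeaklyLaskerian

theorem mem_support_of_mem_associatedPrimes {q : PrimeSpectrum R}
    (hq : q.asIdeal ∈ associatedPrimes R A) : q ∈ Module.support R A := by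
  obtain ⟨-, x, hx⟩ := hq
  refine Module.mem_support_iff'.2 ⟨x, fun r hr hrx => hr ?_⟩
  rw [hx]
  exact Ideal.le_radical (Submodule.mem_colon_singleton.2 hrx)

theorem exists_mem_associatedPrimes_le_of_mem_support [IsNoetherianRing R] {q : PrimeSpectrum R}
    (hq : q ∈ Module.support R A) : ∃ p ∈ associatedPrimes R A, p ≤ q.asIdeal := by
  obtain ⟨x, hx⟩ := Module.mem_support_iff_exists_annihilator.1 hq
  obtain ⟨p, hp, hpq⟩ := Ideal.exists_minimalPrimes_le hx
  exact ⟨p, associatedPrimes.subset_of_injective (Submodule.subtype_injective _)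
    (Module.associatedPrimes.minimalPrimes_annihilator_subset_associatedPrimes R _ hp), hpq⟩

theorem IsWeaklyLaskerian.of_finite_zeroLocus_associatedPrimes [IsNoetherianRing R]
    (hA : (associatedPrimes R A).Finite)
    (h : ∀ p ∈ associatedPrimes R A, (PrimeSpectrum.zeroLocus (p : Set R)).Finite) :
    IsWeaklyLaskerian R A := by
  intro N
  refine ((hA.biUnion h).image PrimeSpectrum.asIdeal).subset fun q hq => ?_
  have hq' : (⟨q, hq.isPrime⟩ : PrimeSpectrum R) ∈ Module.support R A :=
    Module.support_subset_of_surjective N.mkQ N.mkQ_surjective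
      (mem_support_of_mem_associatedPrimes hq)
  obtain ⟨p, hp, hpq⟩ := exists_mem_associatedPrimes_le_of_mem_support hq'
  exact ⟨⟨q, hq.isPrime⟩, Set.mem_biUnion hp hpq, rfl⟩

end WeaklyLaskerian

section LongExactSequences

variable {R}

/-- `Ext^i_R(N, M)` for unbundled modules, as a group of morphisms in the derived category. It is
isomorphic to `extModule` and carries Mathlib's long exact sequences. -/
abbrev ModuleExt (R : Type u) [CommRing R] (N M : Type u) [AddCommGroup N] [Module R N]
    [AddCommGroup M] [Module R M] (i : ℕ) : Type u :=
  Abelian.Ext (ModuleCat.of R N) (ModuleCat.of R M) i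

theorem shortExact_subtype_mkQ {M : Type u} [AddCommGroup M] [Module R M] (L : Submodule R M) :
    (ModuleCat.shortComplexOfCompEqZero L.subtype L.mkQ
      (LinearMap.exact_subtype_mkQ L).linearMap_comp_eq_zero).ShortExact :=
  ModuleCat.shortComplex_shortExact _ (LinearMap.exact_subtype_mkQ L) L.subtype_injective
    L.mkQ_surjective

theorem shortExact_mkQ_range {M N : Type u} [AddCommGroup M] [Module R M] [AddCommGroup N]
    [Module R N] {f : M →ₗ[R] N} (hf : Function.Injective f) :
    (ModuleCat.shortComplexOfCompEqZero f (LinearMap.range f).mkQ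
      (LinearMap.exact_map_mkQ_range f).linearMap_comp_eq_zero).ShortExact :=
  ModuleCat.shortComplex_shortExact _ (LinearMap.exact_map_mkQ_range f) hf
    (Submodule.mkQ_surjective _)

theorem exact_subtype_rangeRestrict {M N : Type u} [AddCommGroup M] [Module R M] [AddCommGroup N]
    [Module R N] (f : M →ₗ[R] N) : Function.Exact (LinearMap.ker f).subtype f.rangeRestrict := by
  rw [LinearMap.exact_iff, LinearMap.ker_rangeRestrict, Submodule.range_subtype]

theorem shortExact_subtype_rangeRestrict {M N : Type u} [AddCommGroup M] [Module R M]
    [AddCommGroup N] [Module R N] (f : M →ₗ[R] N) :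
    (ModuleCat.shortComplexOfCompEqZero (LinearMap.ker f).subtype f.rangeRestrict
      (exact_subtype_rangeRestrict f).linearMap_comp_eq_zero).ShortExact :=
  ModuleCat.shortComplex_shortExact _ (exact_subtype_rangeRestrict f)
    (Submodule.subtype_injective _) f.surjective_rangeRestrict

namespace IsWeaklyLaskerian

variable {S : ShortComplex (ModuleCat.{u} R)} {Y : ModuleCat.{u} R} {i : ℕ}

theorem ker_postcompOfLinear (hS : S.ShortExact)
    (h₃ : ∀ j, j + 1 = i → IsWeaklyLaskerian R (Abelian.Ext Y S.X₃ j)) :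
    IsWeaklyLaskerian R
      (LinearMap.ker ((Abelian.Ext.mk₀ S.f).postcompOfLinear R Y (add_zero i))) := by
  have := hS.mono_f
  cases i with
  | zero =>
    rw [LinearMap.ker_eq_bot.2 (Abelian.Ext.postcomp_mk₀_injective_of_mono Y S.f)]
    exact of_subsingleton
  | succ j =>
    let δ : Abelian.Ext Y S.X₃ j →ₗ[R] Abelian.Ext Y S.X₁ (j + 1) :=
      hS.extClass.postcompOfLinear R Y rfl
    have hle : LinearMap.ker ((Abelian.Ext.mk₀ S.f).postcompOfLinear R Y (add_zero (j + 1))) ≤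
        LinearMap.range δ :=
      fun y hy => Abelian.Ext.covariant_sequence_exact₁ Y hS y hy rfl
    exact ((h₃ j rfl).of_surjective δ.rangeRestrict δ.surjective_rangeRestrict).of_injective
      (Submodule.inclusion hle) (Submodule.inclusion_injective hle)

theorem covariantExt₁ (hS : S.ShortExact)
    (h₂ : IsWeaklyLaskerian R (Abelian.Ext Y S.X₂ i))
    (h₃ : ∀ j, j + 1 = i → IsWeaklyLaskerian R (Abelian.Ext Y S.X₃ j)) :
    IsWeaklyLaskerian R (Abelian.Ext Y S.X₁ i) :=
  of_exact (LinearMap.exact_subtype_ker_map _) (ker_postcompOfLinear hS h₃) h₂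

theorem covariantExt₃ (hS : S.ShortExact)
    (h₂ : IsWeaklyLaskerian R (Abelian.Ext Y S.X₂ i))
    (h₁ : IsWeaklyLaskerian R (Abelian.Ext Y S.X₁ (i + 1))) :
    IsWeaklyLaskerian R (Abelian.Ext Y S.X₃ i) :=
  of_exact (f := (Abelian.Ext.mk₀ S.g).postcompOfLinear R Y (add_zero i))
    (g := hS.extClass.postcompOfLinear R Y rfl)
    ((ShortComplex.ab_exact_iff_function_exact _).1
      (Abelian.Ext.covariant_sequence_exact₃' Y hS i (i + 1) rfl)) h₂ h₁

theorem contravariantExt₂ (hS : S.ShortExact)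
    (h₁ : IsWeaklyLaskerian R (Abelian.Ext S.X₁ Y i))
    (h₃ : IsWeaklyLaskerian R (Abelian.Ext S.X₃ Y i)) :
    IsWeaklyLaskerian R (Abelian.Ext S.X₂ Y i) :=
  of_exact (f := (Abelian.Ext.mk₀ S.g).precompOfLinear R Y (zero_add i))
    (g := (Abelian.Ext.mk₀ S.f).precompOfLinear R Y (zero_add i))
    ((ShortComplex.ab_exact_iff_function_exact _).1
      (Abelian.Ext.contravariant_sequence_exact₂' hS Y i)) h₃ h₁

theorem contravariantExt₃ (hS : S.ShortExact)
    (h₂ : IsWeaklyLaskerian R (Abelian.Ext S.X₂ Y i))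
    (h₁ : ∀ j, j + 1 = i → IsWeaklyLaskerian R (Abelian.Ext S.X₁ Y j)) :
    IsWeaklyLaskerian R (Abelian.Ext S.X₃ Y i) := by
  have := hS.epi_g
  cases i with
  | zero =>
    exact h₂.of_injective ((Abelian.Ext.mk₀ S.g).precompOfLinear R Y (zero_add 0))
      (Abelian.Ext.precomp_mk₀_injective_of_epi Y S.g)
  | succ i =>
    refine of_exact (f := hS.extClass.precompOfLinear R Y (add_comm 1 i))
      (g := (Abelian.Ext.mk₀ S.g).precompOfLinear R Y (zero_add (i + 1))) ?_ (h₁ i rfl) h₂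
    exact (ShortComplex.ab_exact_iff_function_exact _).1
      (Abelian.Ext.contravariant_sequence_exact₃' hS Y i (i + 1) (add_comm 1 i))

theorem ext_congr_left {N N' : ModuleCat.{u} R} (e : N ≅ N')
    (h : IsWeaklyLaskerian R (Abelian.Ext N Y i)) : IsWeaklyLaskerian R (Abelian.Ext N' Y i) := by
  refine h.of_injective ((Abelian.Ext.mk₀ e.hom).precompOfLinear R Y (zero_add i))
    (Function.LeftInverse.injective
      (g := (Abelian.Ext.mk₀ e.inv).precompOfLinear R Y (zero_add i)) fun x => ?_)
  simp

theorem ext_congr_right {N N' : ModuleCat.{u} R} (e : N ≅ N')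
    (h : IsWeaklyLaskerian R (Abelian.Ext Y N i)) : IsWeaklyLaskerian R (Abelian.Ext Y N' i) := by
  refine h.of_injective ((Abelian.Ext.mk₀ e.inv).postcompOfLinear R Y (add_zero i))
    (Function.LeftInverse.injective
      (g := (Abelian.Ext.mk₀ e.hom).postcompOfLinear R Y (add_zero i)) fun x => ?_)
  simp

end IsWeaklyLaskerian

end LongExactSequences

section ChangeOfFirstArgument

variable {R}
variable {M N : Type u} [AddCommGroup M] [Module R M] [AddCommGroup N] [Module R N]

theorem annihilator_le_annihilator_moduleExt (i : ℕ) :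
    Module.annihilator R N ≤ Module.annihilator R (ModuleExt R N M i) := by
  intro r hr
  have hrN : r • 𝟙 (ModuleCat.of R N) = 0 := by
    ext n
    exact Module.mem_annihilator.1 hr n
  refine Module.mem_annihilator.2 fun y => ?_
  calc r • y = (Abelian.Ext.mk₀ (r • 𝟙 (ModuleCat.of R N))).comp y (zero_add i) := by
        rw [Abelian.Ext.mk₀_smul, Abelian.Ext.smul_comp, Abelian.Ext.mk₀_id_comp]
    _ = 0 := by rw [hrN, Abelian.Ext.mk₀_zero, Abelian.Ext.zero_comp]

theorem subsingleton_moduleExt [Subsingleton N] (i : ℕ) : Subsingleton (ModuleExt R N M i) := by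
  rw [← Module.annihilator_eq_top_iff (R := R), eq_top_iff,
    ← Module.annihilator_eq_top_iff.2 ‹Subsingleton N›]
  exact annihilator_le_annihilator_moduleExt i

theorem moduleExt_self_isWeaklyLaskerian (hM : IsWeaklyLaskerian R M) (i : ℕ) :
    IsWeaklyLaskerian R (ModuleExt R R M i) := by
  cases i with
  | zero =>
    exact hM.of_linearEquiv (Abelian.Ext.linearEquiv₀ (R := R) ≪≫ₗ
      ModuleCat.homLinearEquiv (S := R) ≪≫ₗ LinearMap.ringLmapEquivSelf R R M).symm
  | succ i =>
    have : Projective (ModuleCat.of R R) := (IsProjective.iff_projective (P := R)).1 inferInstance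
    have : Subsingleton (ModuleExt R R M (i + 1)) := Abelian.Ext.subsingleton_of_projective _ _ i
    exact IsWeaklyLaskerian.of_subsingleton

theorem moduleExt_quotient_isWeaklyLaskerian_of_le {I J : Ideal R} {i : ℕ} (hIJ : I ≤ J)
    (hI : IsWeaklyLaskerian R (ModuleExt R (R ⧸ I) M i))
    (hker : ∀ j, j + 1 = i →
      IsWeaklyLaskerian R (ModuleExt R (LinearMap.ker (Submodule.factor hIJ)) M j)) :
    IsWeaklyLaskerian R (ModuleExt R (R ⧸ J) M i) :=
  .contravariantExt₃ (LinearMap.shortExact_shortComplexKer (Submodule.factor_surjective hIJ))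
    hI hker

theorem moduleExt_isWeaklyLaskerian_of_support_subset [IsNoetherianRing R] (I : Ideal R)
    (hI : ∀ i, IsWeaklyLaskerian R (ModuleExt R (R ⧸ I) M i)) (i : ℕ)
    (N : Type u) [AddCommGroup N] [Module R N] [hN : Module.Finite R N]
    (hsupp : Module.support R N ⊆ PrimeSpectrum.zeroLocus (I : Set R)) :
    IsWeaklyLaskerian R (ModuleExt R N M i) := by
  induction i using Nat.strong_induction_on generalizing N with
  | h i ih =>
    induction hN using IsNoetherianRing.induction_on_isQuotientEquivQuotientPrime R with
    | subsingleton N =>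
      have := subsingleton_moduleExt (R := R) (M := M) (N := N) i
      exact .of_subsingleton
    | quotient N p e =>
      rw [e.support_eq, Module.support_eq_zeroLocus, Ideal.annihilator_quotient] at hsupp
      have hIp : I ≤ p.asIdeal := hsupp (subset_refl (p.asIdeal : Set R))
      refine .ext_congr_left e.symm.toModuleIso
        (moduleExt_quotient_isWeaklyLaskerian_of_le hIp (hI i) fun j hj => ih j (by lia) _ ?_)
      refine (Module.support_subset_of_injective _ (Submodule.subtype_injective _)).trans ?_
      rw [Module.support_eq_zeroLocus, Ideal.annihilator_quotient]
    | exact N₁ N₂ N₃ f g hf hg hfg ih₁ ih₃ =>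
      rw [Module.support_of_exact hfg hf hg, Set.union_subset_iff] at hsupp
      exact .contravariantExt₂ (hS := ModuleCat.shortComplex_shortExact
        (ModuleCat.shortComplexOfCompEqZero f g hfg.linearMap_comp_eq_zero) hfg hf hg)
        (ih₁ hsupp.1) (ih₃ hsupp.2)

theorem moduleExt_isWeaklyLaskerian [IsNoetherianRing R] (hM : IsWeaklyLaskerian R M) (i : ℕ)
    [Module.Finite R N] : IsWeaklyLaskerian R (ModuleExt R N M i) := by
  refine moduleExt_isWeaklyLaskerian_of_support_subset ⊥ (fun j => ?_) i N (by simp)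
  exact .ext_congr_left (Submodule.quotEquivOfEqBot (⊥ : Ideal R) rfl).symm.toModuleIso
    (moduleExt_self_isWeaklyLaskerian hM j)

end ChangeOfFirstArgument

/-! ### Comparison of the two versions of Ext -/

section Comparison

variable {R}
variable {X X' : ModuleCat.{u} R} (P : ProjectiveResolution X) {P' : ProjectiveResolution X'}
  (Y : ModuleCat.{u} R) (n : ℕ)

/-- The complex `Hom(P, Y)` in the opposite category, where `Ext R (ModuleCat R) n` computes
homology, around degree `n`. -/
noncomputable abbrev opHomShortComplex : ShortComplex (ModuleCat.{u} R)ᵒᵖ :=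
  (((((linearYoneda R (ModuleCat.{u} R)).obj Y).rightOp).mapHomologicalComplex
    (ComplexShape.down ℕ)).obj P.complex).sc n

/-- The `n`-cocycles of `Hom(P, Y)`, the maps `P_n ⟶ Y` vanishing on the image of `P_{n+1}`. -/
noncomputable abbrev homCocycles : Submodule R (opHomShortComplex P Y n).unop.X₂ :=
  LinearMap.ker (opHomShortComplex P Y n).unop.g.hom

/-- The `n`-coboundaries of `Hom(P, Y)`, as a submodule of the cocycles. -/
noncomputable abbrev homCoboundaries : Submodule R (homCocycles P Y n) :=
  LinearMap.range (opHomShortComplex P Y n).unop.moduleCatToCycles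

variable {P Y n}

theorem mem_homCoboundaries_iff {f : homCocycles P Y n} :
    f ∈ homCoboundaries P Y n ↔ ∃ g : P.complex.X ((ComplexShape.down ℕ).next n) ⟶ Y,
      P.complex.d n ((ComplexShape.down ℕ).next n) ≫ g = f.1 :=
  exists_congr fun _ => Subtype.ext_iff

/-- The class of a cocycle of `Hom(P, Y)` in Mathlib's derived-category `Ext`. -/
noncomputable def extClassOfCocycle : homCocycles P Y n →ₗ[R] Abelian.Ext X Y n where
  toFun f := P.extMk f.1 ((ComplexShape.down ℕ).prev n) (by simp) f.2
  map_add' f g := (P.add_extMk f.1 g.1 _ (by simp) f.2 g.2).symm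
  map_smul' r f := by
    rw [RingHom.id_apply, Abelian.Ext.smul_eq_comp_mk₀]
    refine Eq.trans ?_ (P.extMk_comp_mk₀ f.1 _ (by simp) f.2 (r • 𝟙 Y)).symm
    congr 1

theorem extClassOfCocycle_surjective :
    Function.Surjective (extClassOfCocycle : homCocycles P Y n →ₗ[R] Abelian.Ext X Y n) := by
  intro α
  obtain ⟨f, hf, h⟩ := P.extMk_surjective α ((ComplexShape.down ℕ).prev n) (by simp)
  exact ⟨⟨f, hf⟩, h⟩

theorem eq_zero_of_extMk_eq_zero {m : ℕ} (hm : 0 + 1 = m) {f : P.complex.X 0 ⟶ Y}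
    (hf : P.complex.d m 0 ≫ f = 0) (h : P.extMk f m hm hf = 0) : f = 0 := by
  rw [← P.extEquivCohomologyClass.apply_eq_iff_eq,
    ProjectiveResolution.extEquivCohomologyClass_extMk,
    ProjectiveResolution.extEquivCohomologyClass_zero,
    CochainComplex.HomComplex.CohomologyClass.mk_eq_zero_iff,
    CochainComplex.HomComplex.Cocycle.toSingleMk_mem_coboundaries_iff _ _ _ _ _ 1 (by simp)] at h
  obtain ⟨g, hg⟩ := h
  have hz : Limits.IsZero (P.cochainComplex.X 1) :=
    P.cochainComplex.isZero_of_isStrictlyLE 0 1 (by lia)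
  rw [hz.eq_of_src g 0, Limits.comp_zero] at hg
  rw [← cancel_epi (P.cochainComplexXIso (-(0 : ℕ)) 0 rfl).hom, ← hg, Limits.comp_zero]

theorem ker_extClassOfCocycle :
    LinearMap.ker (extClassOfCocycle : homCocycles P Y n →ₗ[R] Abelian.Ext X Y n) =
      homCoboundaries P Y n := by
  ext f
  rw [LinearMap.mem_ker, mem_homCoboundaries_iff]
  cases n with
  | zero =>
    rw [ChainComplex.next_nat_zero, P.complex.shape 0 0 (by simp)]
    constructor
    · intro h
      exact ⟨0, Limits.zero_comp.trans (eq_zero_of_extMk_eq_zero (by simp) f.2 h).symm⟩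
    · rintro ⟨g, hg⟩
      have hf : f = 0 := Subtype.ext (hg.symm.trans Limits.zero_comp)
      rw [hf, map_zero]
  | succ n =>
    rw [ChainComplex.next_nat_succ]
    exact P.extMk_eq_zero_iff f.1 _ (by simp) f.2 n rfl

/-- `extModule` as the cohomology of `Hom(P, Y)`. -/
noncomputable def extModuleIso : extModule R n X Y ≅
    ModuleCat.of R (homCocycles P Y n ⧸ homCoboundaries P Y n) :=
  (P.isoLeftDerivedObj ((linearYoneda R (ModuleCat.{u} R)).obj Y).rightOp n ≪≫
    (opHomShortComplex P Y n).unop.moduleCatLeftHomologyData.op.homologyIso).unop.symm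

/-- The class of a cocycle of `Hom(P, Y)` in `extModule`. -/
noncomputable def extModuleClass : homCocycles P Y n →ₗ[R] extModule R n X Y :=
  extModuleIso.inv.hom ∘ₗ (homCoboundaries P Y n).mkQ

theorem extModuleClass_surjective :
    Function.Surjective (extModuleClass : homCocycles P Y n →ₗ[R] extModule R n X Y) :=
  extModuleIso.symm.toLinearEquiv.surjective.comp (Submodule.mkQ_surjective _)

theorem ker_extModuleClass :
    LinearMap.ker (extModuleClass : homCocycles P Y n →ₗ[R] extModule R n X Y) =
      homCoboundaries P Y n :=
  (LinearMap.ker_comp_of_ker_eq_bot _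
    (LinearMap.ker_eq_bot.2 extModuleIso.symm.toLinearEquiv.injective)).trans (Submodule.ker_mkQ _)

/-- The map `Hom(P', Y) ⟶ Hom(P, Y)` induced by a morphism `P ⟶ P'` of projective resolutions,
around degree `n` and in the opposite category. -/
noncomputable abbrev opHomShortComplexMap {g : X ⟶ X'} (φ : ProjectiveResolution.Hom P P' g) :
    opHomShortComplex P Y n ⟶ opHomShortComplex P' Y n :=
  (HomologicalComplex.shortComplexFunctor _ _ n).map
    ((((linearYoneda R (ModuleCat.{u} R)).obj Y).rightOp.mapHomologicalComplex
      (ComplexShape.down ℕ)).map φ.hom)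

/-- Precomposition with a morphism of projective resolutions, on cocycles. -/
noncomputable def homCocyclesMap {g : X ⟶ X'} (φ : ProjectiveResolution.Hom P P' g) :
    homCocycles P' Y n →ₗ[R] homCocycles P Y n :=
  (ShortComplex.cyclesMap' (ShortComplex.unopMap (opHomShortComplexMap φ))
    (opHomShortComplex P' Y n).unop.moduleCatLeftHomologyData
    (opHomShortComplex P Y n).unop.moduleCatLeftHomologyData).hom

theorem extClassOfCocycle_homCocyclesMap {g : X ⟶ X'} (φ : ProjectiveResolution.Hom P P' g)
    (f : homCocycles P' Y n) : extClassOfCocycle (homCocyclesMap φ f) =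
      (Abelian.Ext.mk₀ g).comp (extClassOfCocycle f) (zero_add n) := by
  refine Eq.trans ?_ (ProjectiveResolution.mk₀_comp_extMk f.1 _ (by simp) f.2 φ).symm
  change P.extMk (homCocyclesMap φ f).1 _ (by simp) (homCocyclesMap φ f).2 = _
  congr 1

theorem extModuleIso_inv_naturality {g : X ⟶ X'} (φ : ProjectiveResolution.Hom P P' g) :
    (extModuleIso (P := P') (Y := Y) (n := n)).inv ≫
        ((Ext R (ModuleCat.{u} R) n).map g.op).app Y =
      ShortComplex.leftHomologyMap' (ShortComplex.unopMap (opHomShortComplexMap φ))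
        (opHomShortComplex P' Y n).unop.moduleCatLeftHomologyData
        (opHomShortComplex P Y n).unop.moduleCatLeftHomologyData ≫
      (extModuleIso (P := P) (Y := Y) (n := n)).inv := by
  have hderived := ProjectiveResolution.isoLeftDerivedObj_hom_naturality g P P' φ.hom
    (by simpa using φ.hom_f_zero_comp_π_f_zero) ((linearYoneda R (ModuleCat.{u} R)).obj Y).rightOp n
  have hhomology := (ShortComplex.leftHomologyMapData
    (ShortComplex.unopMap (opHomShortComplexMap φ))
    (opHomShortComplex P' Y n).unop.moduleCatLeftHomologyData
    (opHomShortComplex P Y n).unop.moduleCatLeftHomologyData).op.homologyMap_comm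
  refine congrArg Quiver.Hom.unop (((Category.assoc _ _ _).symm.trans
    (congrArg (· ≫ (opHomShortComplex P' Y n).unop.moduleCatLeftHomologyData.op.homologyIso.hom)
      hderived)).trans ?_)
  refine (Category.assoc _ _ _).trans (Eq.trans ?_ (Category.assoc _ _ _).symm)
  exact congrArg _ hhomology

theorem extModuleClass_homCocyclesMap {g : X ⟶ X'} (φ : ProjectiveResolution.Hom P P' g)
    (f : homCocycles P' Y n) : extModuleClass (homCocyclesMap φ f) =
      ((Ext R (ModuleCat.{u} R) n).map g.op).app Y (extModuleClass f) := by
  have hclass := LinearMap.congr_fun (congrArg ModuleCat.Hom.hom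
    (ShortComplex.leftHomologyπ_naturality' (ShortComplex.unopMap (opHomShortComplexMap φ))
      (opHomShortComplex P' Y n).unop.moduleCatLeftHomologyData
      (opHomShortComplex P Y n).unop.moduleCatLeftHomologyData)) f
  have hiso := LinearMap.congr_fun (congrArg ModuleCat.Hom.hom
    (extModuleIso_inv_naturality (Y := Y) (n := n) φ)) ((homCoboundaries P' Y n).mkQ f)
  exact (congrArg extModuleIso.inv.hom hclass.symm).trans hiso.symm

variable (X Y n)

/-- Both versions of Ext are cocycles of `Hom(P, Y)` modulo coboundaries. -/
noncomputable def extModuleEquiv : extModule R n X Y ≃ₗ[R] Abelian.Ext X Y n :=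
  (extModuleClass.quotKerEquivOfSurjective extModuleClass_surjective).symm ≪≫ₗ
    Submodule.quotEquivOfEq _ _ (ker_extModuleClass.trans ker_extClassOfCocycle.symm) ≪≫ₗ
    (extClassOfCocycle (P := projectiveResolution X)).quotKerEquivOfSurjective
      extClassOfCocycle_surjective

variable {X}

theorem extModuleEquiv_extModuleClass (f : homCocycles (projectiveResolution X) Y n) :
    extModuleEquiv X Y n (extModuleClass f) = extClassOfCocycle f := by
  have h : (extModuleClass.quotKerEquivOfSurjective extModuleClass_surjective).symm
      (extModuleClass f) = Submodule.Quotient.mk f := by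
    rw [LinearEquiv.symm_apply_eq]
    rfl
  rw [extModuleEquiv, LinearEquiv.trans_apply, LinearEquiv.trans_apply, h]
  rfl

theorem extModuleEquiv_naturality (g : X ⟶ X') (z : extModule R n X' Y) :
    extModuleEquiv X Y n (((Ext R (ModuleCat.{u} R) n).map g.op).app Y z) =
      (Abelian.Ext.mk₀ g).comp (extModuleEquiv X' Y n z) (zero_add n) := by
  let φ : ProjectiveResolution.Hom (projectiveResolution X) (projectiveResolution X') g :=
    { hom := ProjectiveResolution.lift g _ _
      hom_f_zero_comp_π_f_zero := ProjectiveResolution.lift_commutes_zero g _ _ }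
  obtain ⟨f, rfl⟩ := extModuleClass_surjective (P := projectiveResolution X') z
  rw [← extModuleClass_homCocyclesMap φ f, extModuleEquiv_extModuleClass,
    extModuleEquiv_extModuleClass, extClassOfCocycle_homCocyclesMap]

end Comparison

/-! ### Artinian modules: Melkersson's criterion and secondary representation -/

section ArtinianModules

variable {T A : Type*} [CommRing T] [AddCommGroup A] [Module T A]

/-- A module is `𝔞`-power torsion if each of its elements is killed by some power of `𝔞`, that is,
if `Γ_𝔞(A) = A`. -/
def IsPowTorsion (𝔞 : Ideal T) (A : Type*) [AddCommGroup A] [Module T A] : Prop :=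
  ∀ m : A, ∃ n : ℕ, ∀ r ∈ 𝔞 ^ n, r • m = 0

/-- The elements of `0 :_A x` of the form `x ^ k • y` with `y ∈ F`. Melkersson's criterion compares
submodules of an `x`-power torsion module through these layers. -/
def torsionLayer (x : T) (F : Submodule T A) (k : ℕ) : Submodule T (Submodule.torsionBy T A x) :=
  (F.map (LinearMap.lsmul T A (x ^ k))).comap (Submodule.subtype _)

theorem torsionLayer_le_torsionLayer {x : T} {F G : Submodule T A} {k l : ℕ} (hFG : F ≤ G)
    (hkl : k ≤ l) : torsionLayer x F l ≤ torsionLayer x G k := by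
  rintro m ⟨y, hy, hym : x ^ l • y = m⟩
  refine ⟨x ^ (l - k) • y, G.smul_mem _ (hFG hy), ?_⟩
  rw [LinearMap.lsmul_apply, ← mul_smul, ← pow_add, Nat.add_sub_cancel' hkl, hym]
  rfl

theorem le_of_torsionLayer_le {x : T} {F G : Submodule T A} (hx : ∀ m : A, ∃ k : ℕ, x ^ k • m = 0)
    (hGF : G ≤ F) (h : ∀ k, torsionLayer x F k ≤ torsionLayer x G k) : F ≤ G := by
  have mem_of_pow_smul_eq_zero (j : ℕ) : ∀ m ∈ F, x ^ j • m = 0 → m ∈ G := by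
    induction j with
    | zero => intro m _ hm; rw [← one_smul T m, ← pow_zero x, hm]; exact G.zero_mem
    | succ j ih =>
      intro m hmF hm
      have hm' : x ^ j • m ∈ Submodule.torsionBy T A x := by
        rw [Submodule.mem_torsionBy_iff, ← mul_smul, ← pow_succ', hm]
      obtain ⟨y, hyG, hym : x ^ j • y = x ^ j • m⟩ :=
        h j (show (⟨x ^ j • m, hm'⟩ : Submodule.torsionBy T A x) ∈ _ from ⟨m, hmF, rfl⟩)
      rw [← sub_add_cancel m y]
      exact G.add_mem (ih _ (F.sub_mem hmF (hGF hyG)) (by rw [smul_sub, hym, sub_self])) hyG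
  exact fun m hm => (hx m).elim fun j hj => mem_of_pow_smul_eq_zero j m hm hj

theorem exists_forall_ge_le_of_antitone {α : Type*} [PartialOrder α] [WellFoundedLT α]
    {g : ℕ → ℕ → α} (hg : ∀ {n n' k k'}, n ≤ n' → k ≤ k' → g n' k' ≤ g n k) :
    ∃ N, ∀ n ≥ N, ∀ k, g N k ≤ g n k := by
  obtain ⟨K, hK⟩ := WellFoundedLT.antitone_chain_condition (f := fun n => g n n)
    fun _ _ h => hg h h
  have hrow (k : ℕ) : ∃ N, ∀ n ≥ N, g N k = g n k :=
    WellFoundedLT.antitone_chain_condition (f := fun n => g n k) fun _ _ h => hg h le_rfl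
  choose N hN using hrow
  refine ⟨(Finset.range K).sup N ⊔ K, fun n hn k => ?_⟩
  rcases lt_or_ge k K with hk | hk
  · have hNk : N k ≤ (Finset.range K).sup N ⊔ K :=
      (Finset.le_sup (Finset.mem_range.2 hk)).trans le_sup_left
    rw [← hN k _ hNk, ← hN k n (hNk.trans hn)]
  · calc g _ k ≤ g K K := hg le_sup_right hk
      _ = g (max n k) (max n k) := hK _ (hk.trans (le_max_right _ _))
      _ ≤ g n k := hg (le_max_left _ _) (le_max_right _ _)

theorem isArtinian_of_isArtinian_torsionBy (x : T) (hx : ∀ m : A, ∃ k : ℕ, x ^ k • m = 0)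
    [IsArtinian T (Submodule.torsionBy T A x)] : IsArtinian T A := by
  rw [← monotone_stabilizes_iff_artinian]
  intro f
  obtain ⟨N, hN⟩ := exists_forall_ge_le_of_antitone
    (g := fun n k => torsionLayer x (OrderDual.ofDual (f n)) k)
    fun hn hk => torsionLayer_le_torsionLayer (f.monotone hn) hk
  exact ⟨N, fun n hn => le_antisymm (α := Submodule T A)
    (le_of_torsionLayer_le hx (f.monotone hn) (hN n hn)) (f.monotone hn)⟩

theorem IsPowTorsion.isArtinian_of_torsionBySet {𝔞 : Ideal T} (h𝔞 : 𝔞.FG)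
    (hA : IsPowTorsion 𝔞 A) (h : IsArtinian T (Submodule.torsionBySet T A (𝔞 : Set T))) :
    IsArtinian T A := by
  have hpow : ∀ x ∈ 𝔞, ∀ m : A, ∃ k : ℕ, x ^ k • m = 0 := fun x hx m =>
    (hA m).imp fun n hn => hn _ (Ideal.pow_mem_pow hx n)
  clear hA
  induction 𝔞, h𝔞 using Submodule.fg_induction generalizing A with
  | singleton x =>
    rw [Submodule.torsionBySet_span_singleton_eq] at h
    exact isArtinian_of_isArtinian_torsionBy x (hpow x (Submodule.mem_span_singleton_self x))
  | sup I J _ _ hI hJ =>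
    have hsub : (Submodule.torsionBySet T (Submodule.torsionBySet T A (I : Set T)) (J : Set T)).map
        (Submodule.subtype _) ≤ Submodule.torsionBySet T A ((I ⊔ J : Ideal T) : Set T) := by
      rintro _ ⟨m, hm, rfl⟩
      refine (Submodule.mem_torsionBySet_iff _ _).2 fun ⟨r, hr⟩ => ?_
      obtain ⟨i, hi, j, hj, rfl⟩ := Submodule.mem_sup.1 hr
      have him : i • (m : A) = 0 := (Submodule.mem_torsionBySet_iff _ _).1 m.2 ⟨i, hi⟩
      have hjm : j • (m : A) = 0 :=
        congrArg Subtype.val ((Submodule.mem_torsionBySet_iff _ _).1 hm ⟨j, hj⟩)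
      rw [Submodule.subtype_apply, add_smul, him, hjm, zero_add]
    have hIJ := isArtinian_of_le hsub
    refine hI (hJ ?_ fun x hx m => ?_) fun x hx => hpow x (Submodule.mem_sup_left hx)
    · exact isArtinian_of_linearEquiv
        (Submodule.equivMapOfInjective _ (Submodule.subtype_injective _) _).symm
    · exact (hpow x (Submodule.mem_sup_right hx) m).imp fun k hk => Subtype.ext hk

theorem isNoetherian_iff_isArtinian_of_pow_smul_eq_zero [IsNoetherianRing T] {𝔞 : Ideal T}
    (h𝔞 : ∀ p : Ideal T, p.IsPrime → 𝔞 ≤ p → p.IsMaximal) (k : ℕ)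
    (hA : ∀ r ∈ 𝔞 ^ k, ∀ m : A, r • m = 0) : IsNoetherian T A ↔ IsArtinian T A := by
  have hdim : Ring.KrullDimLE 0 (T ⧸ 𝔞 ^ k) := by
    rw [Ring.krullDimLE_zero_iff]
    intro q hq
    have hle : 𝔞 ≤ q.comap (Ideal.Quotient.mk (𝔞 ^ k)) := by
      refine (hq.comap (Ideal.Quotient.mk _)).le_of_pow_le (n := k) ?_
      exact Ideal.mk_ker.symm.le.trans (Ideal.comap_mono bot_le)
    have hmax := h𝔞 _ (hq.comap _) hle
    rw [← Ideal.map_comap_of_surjective _ Ideal.Quotient.mk_surjective q]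
    refine (Ideal.map_eq_top_or_isMaximal_of_surjective _ Ideal.Quotient.mk_surjective
      hmax).resolve_left ?_
    rw [Ideal.map_comap_of_surjective _ Ideal.Quotient.mk_surjective]
    exact hq.ne_top
  have : IsArtinianRing (T ⧸ 𝔞 ^ k) :=
    isArtinianRing_iff_isNoetherianRing_krullDimLE_zero.2 ⟨inferInstance, hdim⟩
  have htors : Module.IsTorsionBySet T A (𝔞 ^ k : Ideal T) := fun m r => hA r r.2 m
  let _ := htors.module
  rw [htors.semilinearMap.isArtinian_iff_of_bijective Function.bijective_id,
    htors.semilinearMap.isNoetherian_iff_of_bijective Function.bijective_id]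
  exact IsSemiprimaryRing.isNoetherian_iff_isArtinian

/-- A module is secondary if it is nonzero and every scalar acts on it surjectively or
nilpotently. Artinian modules are finite sums of secondary submodules. -/
def IsSecondary (T A : Type*) [CommRing T] [AddCommGroup A] [Module T A] : Prop :=
  Nontrivial A ∧ ∀ x : T, Function.Surjective (fun m : A => x • m) ∨
    x ∈ (Module.annihilator T A).radical

theorem IsSecondary.isPrime_radical_annihilator (h : IsSecondary T A) :
    (Module.annihilator T A).radical.IsPrime := by
  have hmem {x : T} :
      x ∈ (Module.annihilator T A).radical ↔ ¬Function.Surjective (x • · : A → A) := by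
    refine ⟨?_, (h.2 x).resolve_left⟩
    rintro ⟨n, hn⟩ hx
    have := h.1
    obtain ⟨m, hm⟩ := exists_ne (0 : A)
    obtain ⟨m', rfl⟩ := hx.iterate n m
    rw [smul_iterate] at hm
    exact hm (Module.mem_annihilator.1 hn m')
  refine Ideal.isPrime_iff.2 ⟨?_, fun {x y} hxy => ?_⟩
  · rw [Ideal.ne_top_iff_one, hmem, not_not]
    exact fun m => ⟨m, one_smul T m⟩
  · by_contra! hxy'
    rw [hmem, hmem, not_not, not_not] at hxy'
    rw [hmem] at hxy
    refine hxy ?_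
    simpa only [mul_smul, Function.comp_def] using hxy'.1.comp hxy'.2

theorem isSecondary_of_supIrred [IsArtinian T A] {D : Submodule T A} (hD : SupIrred D) :
    IsSecondary T D := by
  refine ⟨Submodule.nontrivial_iff_ne_bot.2 hD.ne_bot, fun x => ?_⟩
  let f : Module.End T D := LinearMap.lsmul T D x
  obtain ⟨n, hn, hn0⟩ := (f.eventually_codisjoint_ker_pow_range_pow.and
    (Filter.eventually_ne_atTop 0)).exists
  have hf (n : ℕ) (m : D) : (f ^ n) m = x ^ n • m := by
    rw [Module.End.pow_apply]
    exact congrFun (smul_iterate x n) m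
  have hsup : (LinearMap.ker (f ^ n)).map D.subtype ⊔ (LinearMap.range (f ^ n)).map D.subtype =
      D := by
    rw [← Submodule.map_sup, codisjoint_iff.1 hn, Submodule.map_subtype_top]
  have eq_top {E : Submodule T D} (hE : E.map D.subtype = D) : E = ⊤ :=
    Submodule.map_injective_of_injective D.subtype_injective
      (hE.trans (Submodule.map_subtype_top D).symm)
  rcases hD.2 hsup with hker | hrange
  · refine Or.inr ⟨n, Module.mem_annihilator.2 fun m => ?_⟩
    rw [← hf]
    exact LinearMap.mem_ker.1 (eq_top hker ▸ Submodule.mem_top)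
  · refine Or.inl fun m => ?_
    obtain ⟨m', hm'⟩ := LinearMap.range_eq_top.1 (eq_top hrange) m
    obtain ⟨j, rfl⟩ := Nat.exists_eq_succ_of_ne_zero hn0
    exact ⟨x ^ j • m', by rw [← hm', hf, pow_succ', mul_smul]⟩

theorem exists_mem_forall_notMem_of_not_le {V : Finset (Ideal T)} (hV : ∀ p ∈ V, p.IsPrime)
    {I : Ideal T} (hI : ∀ p ∈ V, ¬I ≤ p) : ∃ x ∈ I, ∀ p ∈ V, x ∉ p := by
  by_contra! h
  obtain ⟨p, hpV, hIp⟩ := (Ideal.subset_union_prime (f := id) ⊤ ⊤ (fun p hp _ _ => hV p hp)).1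
    fun x hx => Set.mem_iUnion₂.2 ((h x hx).imp fun p hp => ⟨hp.1, hp.2⟩)
  exact hI p hpV hIp

theorem exists_mem_pow_smul_top_le_range_lsmul [IsArtinian T A] {𝔞 : Ideal T} (h𝔞 : 𝔞.FG) :
    ∃ x ∈ 𝔞, ∃ k : ℕ, 𝔞 ^ k • (⊤ : Submodule T A) ≤ LinearMap.range (LinearMap.lsmul T A x) := by
  classical
  obtain ⟨s, hs, hirr⟩ := exists_supIrred_decomposition (⊤ : Submodule T A)
  have hsec : ∀ D ∈ s, IsSecondary T D := fun D hD => isSecondary_of_supIrred (hirr hD)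
  let V : Finset (Ideal T) := (s.image fun D => (Module.annihilator T D).radical).filter (¬𝔞 ≤ ·)
  obtain ⟨x, hx𝔞, hxV⟩ : ∃ x ∈ 𝔞, ∀ p ∈ V, x ∉ p := by
    refine exists_mem_forall_notMem_of_not_le (fun p hp => ?_)
      fun p hp => (Finset.mem_filter.1 hp).2
    obtain ⟨D, hD, rfl⟩ := Finset.mem_image.1 (Finset.mem_filter.1 hp).1
    exact (hsec D hD).isPrime_radical_annihilator
  have hevent : ∀ D ∈ s, ∀ᶠ k in Filter.atTop,
      𝔞 ^ k • D ≤ LinearMap.range (LinearMap.lsmul T A x) := by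
    intro D hD
    by_cases hle : 𝔞 ≤ (Module.annihilator T D).radical
    · obtain ⟨k, hk⟩ := Ideal.exists_pow_le_of_le_radical_of_fg hle h𝔞
      filter_upwards [Filter.eventually_ge_atTop k] with j hj
      refine Submodule.smul_le.2 fun r hr m hm => ?_
      have hrm := Module.mem_annihilator.1 (hk (Ideal.pow_le_pow_right hj hr)) (⟨m, hm⟩ : D)
      rw [show r • m = 0 from congrArg Subtype.val hrm]
      exact Submodule.zero_mem _
    · have hx : x ∉ (Module.annihilator T D).radical :=
        hxV _ (Finset.mem_filter.2 ⟨Finset.mem_image_of_mem _ hD, hle⟩)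
      refine Filter.Eventually.of_forall fun k => Submodule.smul_le_right.trans fun m hm => ?_
      obtain ⟨m', hm'⟩ := ((hsec D hD).2 x).resolve_right hx ⟨m, hm⟩
      exact ⟨m', congrArg Subtype.val hm'⟩
  obtain ⟨k, hk⟩ := ((Finset.eventually_all s).2 hevent).exists
  refine ⟨x, hx𝔞, k, ?_⟩
  rw [← hs, Finset.sup_id_eq_sSup, sSup_eq_iSup]
  simpa only [Submodule.smul_iSup, iSup_le_iff, Finset.mem_coe] using hk

theorem IsPowTorsion.exists_mem_finite_quotient_range_lsmul [IsNoetherianRing T] {𝔞 : Ideal T}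
    (h𝔞 : ∀ p : Ideal T, p.IsPrime → 𝔞 ≤ p → p.IsMaximal) (hA : IsPowTorsion 𝔞 A)
    (hfin : Module.Finite T (Submodule.torsionBySet T A (𝔞 : Set T))) :
    ∃ x ∈ 𝔞, Module.Finite T (A ⧸ LinearMap.range (LinearMap.lsmul T A x)) := by
  have hart : IsArtinian T A := by
    refine hA.isArtinian_of_torsionBySet 𝔞.fg_of_isNoetherianRing ?_
    refine (isNoetherian_iff_isArtinian_of_pow_smul_eq_zero h𝔞 1 fun r hr m => ?_).1 inferInstance
    exact @Submodule.torsionBySet_isTorsionBySet T A _ _ _ 𝔞 m ⟨r, pow_one 𝔞 ▸ hr⟩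
  obtain ⟨x, hx, k, hk⟩ := exists_mem_pow_smul_top_le_range_lsmul (A := A) 𝔞.fg_of_isNoetherianRing
  have hnoeth : IsNoetherian T (A ⧸ LinearMap.range (LinearMap.lsmul T A x)) := by
    refine (isNoetherian_iff_isArtinian_of_pow_smul_eq_zero h𝔞 k fun r hr m => ?_).2 inferInstance
    obtain ⟨m, rfl⟩ := Submodule.mkQ_surjective _ m
    rw [← map_smul, Submodule.mkQ_apply, Submodule.Quotient.mk_eq_zero]
    exact hk (Submodule.smul_mem_smul hr Submodule.mem_top)
  exact ⟨x, hx, inferInstance⟩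

end ArtinianModules

/-! ### Localizing a one-dimensional quotient to dimension zero -/

section LargePrimes

variable {R}

open PrimeSpectrum

/-- The primes over `𝔞` that are contained in infinitely many primes. When `R ⧸ 𝔞` is noetherian of
dimension at most one, these are finitely many minimal primes of `𝔞`. -/
def largePrimes (𝔞 : Ideal R) : Set (PrimeSpectrum R) :=
  {p ∈ zeroLocus (𝔞 : Set R) | (zeroLocus (p.asIdeal : Set R)).Infinite}

/-- The complement of the union of the large primes over `𝔞`. Inverting it turns a one-dimensional
`R ⧸ 𝔞` into a zero-dimensional ring, and the primes over `𝔞` that it meets lie in only finitely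
many primes. -/
def largePrimesCompl (𝔞 : Ideal R) : Submonoid R :=
  ⨅ p ∈ largePrimes 𝔞, p.asIdeal.primeCompl

variable {𝔞 : Ideal R}

theorem mem_largePrimesCompl_iff {s : R} :
    s ∈ largePrimesCompl 𝔞 ↔ ∀ p ∈ largePrimes 𝔞, s ∉ p.asIdeal := by
  simp only [largePrimesCompl, Submonoid.mem_iInf, Ideal.mem_primeCompl_iff]

theorem finite_zeroLocus_of_mem_largePrimesCompl {q : PrimeSpectrum R}
    (hq : q ∈ zeroLocus (𝔞 : Set R)) {s : R} (hs : s ∈ largePrimesCompl 𝔞) (hsq : s ∈ q.asIdeal) :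
    (zeroLocus (q.asIdeal : Set R)).Finite := by
  by_contra hinf
  exact mem_largePrimesCompl_iff.1 hs q ⟨hq, hinf⟩ hsq

theorem eq_of_le_of_mem_largePrimes (hdim : ringKrullDim (R ⧸ 𝔞) ≤ 1) {p q : PrimeSpectrum R}
    (hp : p ∈ largePrimes 𝔞) (hq : q ∈ zeroLocus (𝔞 : Set R)) (hqp : q ≤ p) : q = p := by
  rw [ringKrullDim_quotient, Order.krullDim_le_one_iff] at hdim
  rcases hdim ⟨p, hp.1⟩ with hmin | hmax
  · exact le_antisymm hqp (hmin (b := ⟨q, hq⟩) hqp)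
  · refine absurd ((Set.finite_singleton p).subset fun q hpq => ?_) hp.2
    exact le_antisymm (hmax (b := ⟨q, Set.Subset.trans hp.1 hpq⟩) hpq) hpq

theorem finite_largePrimes [IsNoetherianRing R] (hdim : ringKrullDim (R ⧸ 𝔞) ≤ 1) :
    (largePrimes 𝔞).Finite := by
  refine Set.Finite.of_finite_image ((𝔞.finite_minimalPrimes_of_isNoetherianRing R).subset ?_)
    fun _ _ _ _ h => PrimeSpectrum.ext h
  rintro _ ⟨p, hp, rfl⟩
  refine ⟨⟨p.isPrime, hp.1⟩, fun q hq hqp => ?_⟩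
  exact (congrArg asIdeal
    (eq_of_le_of_mem_largePrimes hdim (q := ⟨q, hq.1⟩) hp hq.2 hqp)).ge

theorem exists_mem_largePrimesCompl [IsNoetherianRing R] (hdim : ringKrullDim (R ⧸ 𝔞) ≤ 1)
    {I : Ideal R} (hI : ∀ p ∈ largePrimes 𝔞, ¬I ≤ p.asIdeal) :
    ∃ s ∈ largePrimesCompl 𝔞, s ∈ I := by
  obtain ⟨s, hsI, hs⟩ := exists_mem_forall_notMem_of_not_le (I := I)
    (V := ((finite_largePrimes hdim).image asIdeal).toFinset)
    (by simpa using fun p _ => p.isPrime) (by simpa using hI)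
  exact ⟨s, mem_largePrimesCompl_iff.2 (by simpa using hs), hsI⟩

theorem mem_largePrimes_of_disjoint [IsNoetherianRing R] (hdim : ringKrullDim (R ⧸ 𝔞) ≤ 1)
    {q : PrimeSpectrum R} (hq : q ∈ zeroLocus (𝔞 : Set R))
    (hdisj : Disjoint (largePrimesCompl 𝔞 : Set R) (q.asIdeal : Set R)) : q ∈ largePrimes 𝔞 := by
  by_contra hlarge
  obtain ⟨s, hs, hsq⟩ := exists_mem_largePrimesCompl (I := q.asIdeal) hdim fun p hp hqp =>
    hlarge (eq_of_le_of_mem_largePrimes hdim hp hq hqp ▸ hp)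
  exact Set.disjoint_left.1 hdisj hs hsq

theorem isMaximal_of_map_largePrimesCompl_le [IsNoetherianRing R]
    (hdim : ringKrullDim (R ⧸ 𝔞) ≤ 1) (P : Ideal (Localization (largePrimesCompl 𝔞))) [P.IsPrime]
    (hP : 𝔞.map (algebraMap R (Localization (largePrimesCompl 𝔞))) ≤ P) : P.IsMaximal := by
  have hlarge (Q : Ideal (Localization (largePrimesCompl 𝔞))) [hQ : Q.IsPrime]
      (hle : 𝔞.map (algebraMap R _) ≤ Q) :
      (⟨Q.under R, inferInstance⟩ : PrimeSpectrum R) ∈ largePrimes 𝔞 :=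
    mem_largePrimes_of_disjoint hdim (Ideal.map_le_iff_le_comap.1 hle)
      ((IsLocalization.disjoint_under_iff _ (Localization _) Q).2 hQ.ne_top)
  obtain ⟨Q, hQ, hPQ⟩ := Ideal.exists_le_maximal P (Ideal.IsPrime.ne_top ‹_›)
  have hunder : P.under R = Q.under R :=
    congrArg asIdeal (eq_of_le_of_mem_largePrimes hdim (hlarge Q (hP.trans hPQ)) (hlarge P hP).1
      (Ideal.comap_mono hPQ))
  rwa [← IsLocalization.map_under (largePrimesCompl 𝔞) _ P, hunder,
    IsLocalization.map_under (largePrimesCompl 𝔞)]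

end LargePrimes

section LocalizedFiniteness

variable {R}
variable {Q : Type u} [AddCommGroup Q] [Module R Q]

open TensorProduct

theorem finite_localizedModule_of_exact {S : Submonoid R} {A B C : Type*} [AddCommGroup A]
    [Module R A] [AddCommGroup B] [Module R B] [AddCommGroup C] [Module R C] {f : A →ₗ[R] B}
    {g : B →ₗ[R] C} (hfg : Function.Exact f g) (hg : Function.Surjective g)
    [Module.Finite (Localization S) (LocalizedModule S A)]
    [Module.Finite (Localization S) (LocalizedModule S C)] :
    Module.Finite (Localization S) (LocalizedModule S B) :=
  .of_exact (f := LocalizedModule.map S f) (g := LocalizedModule.map S g)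
    (LocalizedModule.map_exact S f g hfg) (IsLocalizedModule.map_surjective S _ _ g hg)

theorem finite_localizedModule_of_surjective {S : Submonoid R} {A B : Type*} [AddCommGroup A]
    [Module R A] [AddCommGroup B] [Module R B] {f : A →ₗ[R] B} (hf : Function.Surjective f)
    [Module.Finite (Localization S) (LocalizedModule S A)] :
    Module.Finite (Localization S) (LocalizedModule S B) :=
  .of_surjective (LocalizedModule.map S f) (IsLocalizedModule.map_surjective S _ _ f hf)

theorem finite_localizedModule_iff {S : Submonoid R} :
    Module.Finite (Localization S) (LocalizedModule S Q) ↔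
      ∃ L : Submodule R Q, L.FG ∧ ∀ q : Q, ∃ s ∈ S, s • q ∈ L := by
  classical
  constructor
  · rintro ⟨⟨t, ht⟩⟩
    refine ⟨.span R (IsLocalizedModule.finsetIntegerMultiple S (LocalizedModule.mkLinearMap S Q) t),
      Submodule.fg_span (Finset.finite_toSet _), fun q => ?_⟩
    obtain ⟨s, hs⟩ := multiple_mem_span_of_mem_localization_span S (Localization S) (t : Set _)
      (LocalizedModule.mkLinearMap S Q q) (ht ▸ Submodule.mem_top)
    rw [Submonoid.smul_def, ← map_smul] at hs
    obtain ⟨s', hs'⟩ := IsLocalizedModule.smul_mem_finsetIntegerMultiple_span S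
      (LocalizedModule.mkLinearMap S Q) _ t hs
    refine ⟨s' * s, S.mul_mem s'.2 s.2, ?_⟩
    rwa [mul_smul]
  · rintro ⟨L, hL, hQ⟩
    have : Module.Finite R L := .of_fg hL
    have : Subsingleton (LocalizedModule S (Q ⧸ L)) := by
      refine LocalizedModule.subsingleton_iff.2 fun y => ?_
      obtain ⟨q, rfl⟩ := L.mkQ_surjective y
      obtain ⟨s, hs, hsq⟩ := hQ q
      exact ⟨s, hs, (Submodule.Quotient.mk_eq_zero L).2 hsq⟩
    exact finite_localizedModule_of_exact (LinearMap.exact_subtype_mkQ L) L.mkQ_surjective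

theorem mem_associatedPrimes_of_smul_mem_iff [IsNoetherianRing R] {N : Submodule R Q} {p : Ideal R}
    [hp : p.IsPrime] {x : Q} (h : ∀ r : R, r • x ∈ N ↔ r ∈ p) : p ∈ associatedPrimes R (Q ⧸ N) := by
  refine isAssociatedPrime_iff.2 ⟨hp, N.mkQ x, ?_⟩
  ext r
  rw [Submodule.mem_colon_singleton, ← map_smul, Submodule.mem_bot, Submodule.mkQ_apply,
    Submodule.Quotient.mk_eq_zero, h]

theorem mem_of_linearCombination_eq_zero {p : Ideal R} [Module (R ⧸ p) Q]
    [IsScalarTower R (R ⧸ p) Q] {ι : Type*} {v : ι → Q} (hv : LinearIndependent (R ⧸ p) v)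
    {f : ι →₀ R} (hf : Finsupp.linearCombination R v f = 0) (i : ι) : f i ∈ p := by
  have hzero := linearIndependent_iff.1 hv (f.mapRange (Ideal.Quotient.mk p) (map_zero _)) (by
    rw [← hf, Finsupp.linearCombination_apply, Finsupp.linearCombination_apply,
      Finsupp.sum_mapRange_index (h := fun i a => a • v i) fun _ => zero_smul _ _]
    exact Finsupp.sum_congr fun i _ => algebraMap_smul (R ⧸ p) (f i) (v i))
  have hi := DFunLike.congr_fun hzero i
  rwa [Finsupp.mapRange_apply, Finsupp.zero_apply, Ideal.Quotient.eq_zero_iff_mem] at hi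

theorem IsWeaklyLaskerian.finite_of_linearIndependent [IsNoetherianRing R] {p : Ideal R}
    (hp : (PrimeSpectrum.zeroLocus (p : Set R)).Infinite) (hQ : IsWeaklyLaskerian R Q)
    [Module (R ⧸ p) Q] [IsScalarTower R (R ⧸ p) Q] {ι : Type*} {v : ι → Q}
    (hv : LinearIndependent (R ⧸ p) v) : Finite ι := by
  by_contra! hι
  let e := hp.natEmbedding
  let q (n : ℕ) : Ideal R := (e n : PrimeSpectrum R).asIdeal
  let w : ℕ → Q := v ∘ Infinite.natEmbedding ι
  have hw : LinearIndependent (R ⧸ p) w := hv.comp _ (Infinite.natEmbedding ι).injective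
  let N₀ : Submodule R (ℕ →₀ R) := ⨅ n, Submodule.comap (Finsupp.lapply n) (q n)
  have hN₀ (f : ℕ →₀ R) : f ∈ N₀ ↔ ∀ n, f n ∈ q n := by
    simp only [N₀, Submodule.mem_iInf, Submodule.mem_comap, Finsupp.lapply_apply]
  have hmem (n : ℕ) (r : R) : r • w n ∈ N₀.map (Finsupp.linearCombination R w) ↔ r ∈ q n := by
    constructor
    · rintro ⟨f, hf, hfr⟩
      have hp : (Finsupp.single n r - f) n ∈ p := mem_of_linearCombination_eq_zero hw
        (by rw [map_sub, hfr, Finsupp.linearCombination_single, sub_self]) n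
      have hq := (q n).add_mem ((e n).2 hp) ((hN₀ f).1 hf n)
      rwa [Finsupp.sub_apply, Finsupp.single_eq_same, sub_add_cancel] at hq
    · intro hr
      refine ⟨.single n r, (hN₀ _).2 fun k => ?_, Finsupp.linearCombination_single _ _ _⟩
      obtain rfl | hk := eq_or_ne k n
      · rwa [Finsupp.single_eq_same]
      · rw [Finsupp.single_eq_of_ne hk]
        exact zero_mem _
  refine Set.infinite_of_injective_forall_mem (f := q)
    (fun i j hij => e.injective (Subtype.ext (PrimeSpectrum.ext hij))) (fun n => ?_)
    (hQ (N₀.map (Finsupp.linearCombination R w)))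
  have : (q n).IsPrime := (e n : PrimeSpectrum R).isPrime
  exact mem_associatedPrimes_of_smul_mem_iff (hmem n)

variable {𝔞 : Ideal R}

theorem IsWeaklyLaskerian.finite_localizedModule_of_mem_largePrimes [IsNoetherianRing R]
    (hdim : ringKrullDim (R ⧸ 𝔞) ≤ 1) (hQ : IsWeaklyLaskerian R Q) {p : PrimeSpectrum R}
    (hp : p ∈ largePrimes 𝔞) (hQp : Module.IsTorsionBySet R Q (p.asIdeal : Set R)) :
    Module.Finite (Localization (largePrimesCompl 𝔞))
      (LocalizedModule (largePrimesCompl 𝔞) Q) := by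
  let _ := hQp.module
  have : IsScalarTower R (R ⧸ p.asIdeal) Q := hQp.isScalarTower
  obtain ⟨v, hv, hmax⟩ := exists_maximal_linearIndepOn (R ⧸ p.asIdeal) (id : Q → Q)
  rw [Set.image_id] at hmax
  have hfin : Finite v := hQ.finite_of_linearIndependent hp.2 hv
  refine finite_localizedModule_iff.2 ⟨.span R v, Submodule.fg_span hfin, fun q => ?_⟩
  by_cases hq : q ∈ v
  · exact ⟨1, one_mem _, Submodule.smul_mem _ _ (Submodule.subset_span hq)⟩
  obtain ⟨a, ha, hmem⟩ := hmax q hq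
  obtain ⟨r, rfl⟩ := Ideal.Quotient.mk_surjective a
  rw [Ne, Ideal.Quotient.eq_zero_iff_mem] at ha
  obtain ⟨t, ht, htr⟩ := exists_mem_largePrimesCompl (I := .span {r} ⊔ p.asIdeal) hdim
    fun p' hp' hle => ha <| by
      rw [eq_of_le_of_mem_largePrimes hdim hp' hp.1 (le_sup_right.trans hle)]
      exact hle (Submodule.mem_sup_left (Ideal.mem_span_singleton_self r))
  obtain ⟨x, hx, y, hy, rfl⟩ := Submodule.mem_sup.1 htr
  obtain ⟨z, rfl⟩ := Ideal.mem_span_singleton'.1 hx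
  refine ⟨_, ht, ?_⟩
  rw [add_smul, hQp (a := ⟨y, hy⟩), add_zero, mul_smul,
    ← Submodule.restrictScalars_span R (R ⧸ p.asIdeal) Ideal.Quotient.mk_surjective]
  exact Submodule.smul_mem _ _ hmem

theorem IsWeaklyLaskerian.finite_localizedModule_of_isTorsionBySet_prime [IsNoetherianRing R]
    (hdim : ringKrullDim (R ⧸ 𝔞) ≤ 1) (hQ : IsWeaklyLaskerian R Q) {p : PrimeSpectrum R}
    (hp : p ∈ PrimeSpectrum.zeroLocus (𝔞 : Set R))
    (hQp : Module.IsTorsionBySet R Q (p.asIdeal : Set R)) :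
    Module.Finite (Localization (largePrimesCompl 𝔞))
      (LocalizedModule (largePrimesCompl 𝔞) Q) := by
  by_cases hlarge : p ∈ largePrimes 𝔞
  · exact hQ.finite_localizedModule_of_mem_largePrimes hdim hlarge hQp
  · obtain ⟨s, hs, hsp⟩ := Set.not_disjoint_iff.1 (mt (mem_largePrimes_of_disjoint hdim hp) hlarge)
    refine finite_localizedModule_iff.2 ⟨⊥, Submodule.fg_bot, fun q => ⟨s, hs, ?_⟩⟩
    exact hQp (a := ⟨s, hsp⟩)

theorem IsWeaklyLaskerian.finite_localizedModule_tensorProduct [IsNoetherianRing R]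
    (hdim : ringKrullDim (R ⧸ 𝔞) ≤ 1) (hQ : IsWeaklyLaskerian R Q)
    (N : Type u) [AddCommGroup N] [Module R N] [hN : Module.Finite R N]
    (hsupp : Module.support R N ⊆ PrimeSpectrum.zeroLocus (𝔞 : Set R)) :
    Module.Finite (Localization (largePrimesCompl 𝔞))
      (LocalizedModule (largePrimesCompl 𝔞) (N ⊗[R] Q)) := by
  induction hN using IsNoetherianRing.induction_on_isQuotientEquivQuotientPrime R with
  | subsingleton N =>
    infer_instance
  | quotient N p e =>
    rw [e.support_eq, Module.support_eq_zeroLocus, Ideal.annihilator_quotient] at hsupp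
    have := IsWeaklyLaskerian.finite_localizedModule_of_isTorsionBySet_prime hdim
      (hQ.of_surjective (p.asIdeal • (⊤ : Submodule R Q)).mkQ (Submodule.mkQ_surjective _))
      (hsupp (Set.Subset.refl (p.asIdeal : Set R))) (Module.isTorsionBySet_quotient_ideal_smul Q _)
    exact finite_localizedModule_of_surjective
      (TensorProduct.congr e (.refl R Q) ≪≫ₗ quotTensorEquivQuotSMul Q p.asIdeal).symm.surjective
  | exact N₁ N₂ N₃ f g hf hg hfg ih₁ ih₃ =>
    rw [Module.support_of_exact hfg hf hg, Set.union_subset_iff] at hsupp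
    have := ih₁ hsupp.1
    have := ih₃ hsupp.2
    exact finite_localizedModule_of_exact (rTensor_exact Q hfg hg)
      (LinearMap.rTensor_surjective Q hg)

theorem IsWeaklyLaskerian.finite_localizedModule [IsNoetherianRing R]
    (hdim : ringKrullDim (R ⧸ 𝔞) ≤ 1) (hQ : IsWeaklyLaskerian R Q)
    (h𝔞 : Module.IsTorsionBySet R Q (𝔞 : Set R)) :
    Module.Finite (Localization (largePrimesCompl 𝔞))
      (LocalizedModule (largePrimesCompl 𝔞) Q) := by
  have := hQ.finite_localizedModule_tensorProduct hdim (R ⧸ 𝔞)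
    (by rw [Module.support_eq_zeroLocus, Ideal.annihilator_quotient])
  have hbot : 𝔞 • (⊤ : Submodule R Q) = ⊥ :=
    eq_bot_iff.2 (Submodule.smul_le.2 fun r hr _ _ => h𝔞 (a := ⟨r, hr⟩))
  exact finite_localizedModule_of_surjective
    (quotTensorEquivQuotSMul Q 𝔞 ≪≫ₗ Submodule.quotEquivOfEqBot _ hbot).surjective

end LocalizedFiniteness

section LocalizedTorsion

variable {R}
variable {X : Type u} [AddCommGroup X] [Module R X] {𝔞 : Ideal R} {S : Submonoid R}

theorem exists_mem_forall_smul_smul_eq_zero {x : X} (h𝔞 : 𝔞.FG)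
    (h : ∀ r ∈ 𝔞, ∃ s ∈ S, s • r • x = 0) : ∃ s ∈ S, ∀ r ∈ 𝔞, s • r • x = 0 := by
  induction 𝔞, h𝔞 using Submodule.fg_induction with
  | singleton r =>
    obtain ⟨s, hs, hsr⟩ := h r (Submodule.mem_span_singleton_self r)
    refine ⟨s, hs, fun r' hr' => ?_⟩
    obtain ⟨t, rfl⟩ := Submodule.mem_span_singleton.1 hr'
    rw [smul_assoc, smul_comm s t, hsr, smul_zero]
  | sup I J _ _ ihI ihJ =>
    obtain ⟨s, hs, hsI⟩ := ihI fun r hr => h r (Submodule.mem_sup_left hr)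
    obtain ⟨t, ht, htJ⟩ := ihJ fun r hr => h r (Submodule.mem_sup_right hr)
    refine ⟨s * t, S.mul_mem hs ht, fun r hr => ?_⟩
    obtain ⟨a, ha, b, hb, rfl⟩ := Submodule.mem_sup.1 hr
    rw [add_smul, smul_add, mul_comm, mul_smul, hsI a ha, mul_comm, mul_smul, htJ b hb,
      smul_zero, smul_zero, add_zero]

theorem algebraMap_smul_localizedModule_mk (r : R) (x : X) (s : S) :
    algebraMap R (Localization S) r • LocalizedModule.mk x s = LocalizedModule.mk (r • x) s := by
  rw [algebraMap_smul, LocalizedModule.smul'_mk]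

theorem torsionBySet_map_le_localized (h𝔞 : 𝔞.FG) :
    Submodule.torsionBySet (Localization S) (LocalizedModule S X)
        (𝔞.map (algebraMap R (Localization S)) : Set (Localization S)) ≤
      (Submodule.torsionBySet R X (𝔞 : Set R)).localized S := by
  intro z hz
  rw [Submodule.mem_torsionBySet_iff] at hz
  induction z using LocalizedModule.induction_on with
  | h x s =>
    obtain ⟨t, ht, htx⟩ := exists_mem_forall_smul_smul_eq_zero (S := S) (x := x) h𝔞 fun r hr => by
      have hrx := hz ⟨algebraMap R _ r, Ideal.mem_map_of_mem _ hr⟩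
      rw [algebraMap_smul_localizedModule_mk, IsLocalizedModule.mk_eq_mk',
        IsLocalizedModule.mk'_eq_zero'] at hrx
      exact ⟨hrx.choose, hrx.choose.2, hrx.choose_spec⟩
    refine (Submodule.mem_localized' ..).2 ⟨t • x, ?_, ⟨t, ht⟩ * s, ?_⟩
    · refine (Submodule.mem_torsionBySet_iff _ _).2 fun r => ?_
      rw [smul_comm, htx r r.2]
    · rw [IsLocalizedModule.mk_eq_mk']
      exact IsLocalizedModule.mk'_cancel_left (LocalizedModule.mkLinearMap S X) x ⟨t, ht⟩ s

theorem finite_torsionBySet_localizedModule [IsNoetherianRing R]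
    [Module.Finite (Localization S)
      (LocalizedModule S (Submodule.torsionBySet R X (𝔞 : Set R)))] :
    Module.Finite (Localization S) (Submodule.torsionBySet (Localization S) (LocalizedModule S X)
      (𝔞.map (algebraMap R (Localization S)) : Set (Localization S))) := by
  have : IsNoetherianRing (Localization S) := IsLocalization.isNoetherianRing S _ inferInstance
  have : Module.Finite (Localization S) ((Submodule.torsionBySet R X (𝔞 : Set R)).localized S) :=
    .equiv (Submodule.localizedEquiv S _).symm
  have hle := torsionBySet_map_le_localized (S := S) (X := X) (IsNoetherian.noetherian 𝔞)
  exact .of_injective (Submodule.inclusion hle) (Submodule.inclusion_injective hle)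

theorem IsPowTorsion.localizedModule (hX : IsPowTorsion 𝔞 X) (S : Submonoid R) :
    IsPowTorsion (𝔞.map (algebraMap R (Localization S))) (LocalizedModule S X) := by
  intro z
  induction z using LocalizedModule.induction_on with
  | h x s =>
    obtain ⟨n, hn⟩ := hX x
    refine ⟨n, fun r hr => ?_⟩
    have hle : (𝔞 ^ n).map (algebraMap R (Localization S)) ≤
        Ideal.torsionOf _ _ (LocalizedModule.mk x s) :=
      Ideal.map_le_iff_le_comap.2 fun a ha => by
        rw [Ideal.mem_comap, Ideal.mem_torsionOf_iff, algebraMap_smul_localizedModule_mk, hn a ha,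
          LocalizedModule.zero_mk]
    rw [← Ideal.map_pow] at hr
    exact hle hr

theorem IsPowTorsion.exists_mem_finite_localizedModule_quotient [IsNoetherianRing R]
    (hdim : ringKrullDim (R ⧸ 𝔞) ≤ 1) (hX : IsPowTorsion 𝔞 X)
    [Module.Finite (Localization (largePrimesCompl 𝔞))
      (LocalizedModule (largePrimesCompl 𝔞) (Submodule.torsionBySet R X (𝔞 : Set R)))] :
    ∃ x ∈ 𝔞, Module.Finite (Localization (largePrimesCompl 𝔞))
      (LocalizedModule (largePrimesCompl 𝔞) (X ⧸ LinearMap.range (LinearMap.lsmul R X x))) := by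
  let S := largePrimesCompl 𝔞
  have : IsNoetherianRing (Localization S) := IsLocalization.isNoetherianRing S _ inferInstance
  obtain ⟨y, hy, hfin⟩ := (hX.localizedModule S).exists_mem_finite_quotient_range_lsmul
    (fun P _ hP => isMaximal_of_map_largePrimesCompl_le hdim P hP)
    finite_torsionBySet_localizedModule
  obtain ⟨⟨⟨x, hx⟩, t⟩, hxt⟩ := (IsLocalization.mem_map_algebraMap_iff S _).1 hy
  have hle : LinearMap.range (LinearMap.lsmul (Localization S) (LocalizedModule S X) y) ≤
      (LinearMap.range (LinearMap.lsmul R X x)).localized S := by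
    rintro _ ⟨z, rfl⟩
    induction z using LocalizedModule.induction_on with
    | h m s =>
      rw [← Submodule.smul_mem_iff_of_isUnit _ (IsLocalization.map_units (Localization S) t),
        LinearMap.lsmul_apply, ← mul_smul, mul_comm, hxt, algebraMap_smul_localizedModule_mk]
      exact (Submodule.mem_localized' ..).2 ⟨_, ⟨m, rfl⟩, s, (IsLocalizedModule.mk_eq_mk' ..).symm⟩
  have : Module.Finite (Localization S)
      (LocalizedModule S X ⧸ (LinearMap.range (LinearMap.lsmul R X x)).localized S) :=
    .of_surjective (Submodule.factor hle) (Submodule.factor_surjective hle)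
  exact ⟨x, hx, .equiv (localizedQuotientEquiv S _)⟩

end LocalizedTorsion

section ExtZero

variable {R}
variable {X : Type u} [AddCommGroup X] [Module R X] {I : Ideal R}

/-- Evaluation at `1` identifies `Hom(R/I, X)` with the elements of `X` killed by `I`. -/
noncomputable def quotientHomEquivTorsionBySet (I : Ideal R) (X : Type*) [AddCommGroup X]
    [Module R X] : ((R ⧸ I) →ₗ[R] X) ≃ₗ[R] Submodule.torsionBySet R X (I : Set R) where
  toFun f := ⟨f 1, (Submodule.mem_torsionBySet_iff _ _).2 fun r => by
    have hr : (r : R) • (1 : R ⧸ I) = 0 := by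
      rw [Algebra.smul_def, mul_one]
      exact Ideal.Quotient.eq_zero_iff_mem.2 r.2
    rw [← map_smul, hr, map_zero]⟩
  map_add' _ _ := rfl
  map_smul' _ _ := rfl
  invFun x := Submodule.liftQ I (LinearMap.toSpanSingleton R X x) fun r hr =>
    (Submodule.mem_torsionBySet_iff _ _).1 x.2 ⟨r, hr⟩
  left_inv f := by
    ext
    exact one_smul R (f 1)
  right_inv x := Subtype.ext (one_smul R (x : X))

/-- The elements of `X` killed by `I`, viewed as `Ext^0(R/I, X)`. -/
noncomputable def extZeroEquivTorsionBySet (I : Ideal R) (X : Type u) [AddCommGroup X]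
    [Module R X] : ModuleExt R (R ⧸ I) X 0 ≃ₗ[R] Submodule.torsionBySet R X (I : Set R) :=
  Abelian.Ext.linearEquiv₀ (R := R) ≪≫ₗ ModuleCat.homLinearEquiv (S := R) ≪≫ₗ
    quotientHomEquivTorsionBySet I X

theorem extZeroEquivTorsionBySet_mk₀ (f : (R ⧸ I) →ₗ[R] X) :
    (extZeroEquivTorsionBySet I X (Abelian.Ext.mk₀ (ModuleCat.ofHom f)) : X) = f 1 := by
  have h : Abelian.Ext.linearEquiv₀ (R := R) (Abelian.Ext.mk₀ (ModuleCat.ofHom f)) =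
      ModuleCat.ofHom f := Abelian.Ext.linearEquiv₀.apply_symm_apply _
  simp only [extZeroEquivTorsionBySet, LinearEquiv.trans_apply, h]
  rfl

end ExtZero

section TorsionWithFiniteLocalization

variable {R}
variable {X : Type u} [AddCommGroup X] [Module R X] {𝔞 : Ideal R}

theorem IsPowTorsion.of_surjective {Y : Type*} [AddCommGroup Y] [Module R Y]
    (hX : IsPowTorsion 𝔞 X) {f : X →ₗ[R] Y} (hf : Function.Surjective f) : IsPowTorsion 𝔞 Y := by
  intro y
  obtain ⟨x, rfl⟩ := hf y
  obtain ⟨n, hn⟩ := hX x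
  exact ⟨n, fun r hr => by rw [← map_smul, hn r hr, map_zero]⟩

theorem IsPowTorsion.support_subset (hX : IsPowTorsion 𝔞 X) :
    Module.support R X ⊆ PrimeSpectrum.zeroLocus (𝔞 : Set R) := by
  intro p hp
  obtain ⟨x, hx⟩ := Module.mem_support_iff_exists_annihilator.1 hp
  obtain ⟨n, hn⟩ := hX x
  refine p.isPrime.le_of_pow_le (n := n) fun r hr => hx ?_
  exact (Submodule.mem_annihilator_span_singleton x r).2 (hn r hr)

theorem mem_associatedPrimes_torsionBySet [IsNoetherianRing R] {q : Ideal R}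
    (hq : q ∈ associatedPrimes R X) (h𝔞 : 𝔞 ≤ q) :
    q ∈ associatedPrimes R (Submodule.torsionBySet R X (𝔞 : Set R)) := by
  obtain ⟨hprime, x, rfl⟩ := isAssociatedPrime_iff.1 hq
  have hx : x ∈ Submodule.torsionBySet R X (𝔞 : Set R) :=
    (Submodule.mem_torsionBySet_iff _ _).2 fun r => Submodule.mem_colon_singleton.1 (h𝔞 r.2)
  refine isAssociatedPrime_iff.2 ⟨hprime, ⟨x, hx⟩, ?_⟩
  ext r
  simp [Submodule.mem_colon_singleton]

theorem IsPowTorsion.isWeaklyLaskerian_of_finite_localizedModule [IsNoetherianRing R]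
    (hX : IsPowTorsion 𝔞 X)
    (hfin : Module.Finite (Localization (largePrimesCompl 𝔞))
      (LocalizedModule (largePrimesCompl 𝔞) X))
    (h₀ : IsWeaklyLaskerian R (ModuleExt R (R ⧸ 𝔞) X 0)) : IsWeaklyLaskerian R X := by
  obtain ⟨L, hL, hXL⟩ := finite_localizedModule_iff.1 hfin
  have : Module.Finite R L := .of_fg hL
  have hquot₀ : IsWeaklyLaskerian R (ModuleExt R (R ⧸ 𝔞) (X ⧸ L) 0) :=
    .covariantExt₃ (shortExact_subtype_mkQ L) h₀ (moduleExt_isWeaklyLaskerian .of_finite 1)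
  have hquot : IsPowTorsion 𝔞 (X ⧸ L) := hX.of_surjective L.mkQ_surjective
  refine .of_exact (LinearMap.exact_subtype_mkQ L) .of_finite ?_
  have hle (q) (hq : q ∈ associatedPrimes R (X ⧸ L)) : 𝔞 ≤ q :=
    hquot.support_subset (mem_support_of_mem_associatedPrimes (q := ⟨q, hq.isPrime⟩) hq)
  refine .of_finite_zeroLocus_associatedPrimes ?_ fun q hq => ?_
  · have hfin := hquot₀.of_linearEquiv (extZeroEquivTorsionBySet 𝔞 _) ⊥
    rw [LinearEquiv.AssociatedPrimes.eq (Submodule.quotEquivOfEqBot _ rfl)] at hfin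
    exact hfin.subset fun q hq => mem_associatedPrimes_torsionBySet hq (hle q hq)
  · obtain ⟨hprime, y, hy⟩ := isAssociatedPrime_iff.1 hq
    obtain ⟨x, rfl⟩ := L.mkQ_surjective y
    obtain ⟨s, hs, hsx⟩ := hXL x
    refine finite_zeroLocus_of_mem_largePrimesCompl (q := ⟨q, hprime⟩) (hle q hq) hs ?_
    change s ∈ q
    rw [hy, Submodule.mem_colon_singleton, ← map_smul, Submodule.mem_bot]
    exact (Submodule.Quotient.mk_eq_zero L).2 hsx

end TorsionWithFiniteLocalization

/-! ### Ext of power torsion modules -/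

section TorsionModules

variable {R}
variable {X : Type u} [AddCommGroup X] [Module R X] {𝔞 : Ideal R}

theorem IsPowTorsion.of_injective {Y : Type*} [AddCommGroup Y] [Module R Y]
    (hY : IsPowTorsion 𝔞 Y) {f : X →ₗ[R] Y} (hf : Function.Injective f) : IsPowTorsion 𝔞 X := by
  intro x
  obtain ⟨n, hn⟩ := hY (f x)
  exact ⟨n, fun r hr => hf (by rw [map_smul, hn r hr, map_zero])⟩

theorem moduleExt_isWeaklyLaskerian_of_ker_of_coker {N : Type u} [AddCommGroup N] [Module R N]
    {x : R} {i : ℕ} (hx : x ∈ Module.annihilator R N)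
    (hker : IsWeaklyLaskerian R (ModuleExt R N (LinearMap.ker (LinearMap.lsmul R X x)) i))
    (hcoker : ∀ j, j + 1 = i →
      IsWeaklyLaskerian R (ModuleExt R N (X ⧸ LinearMap.range (LinearMap.lsmul R X x)) j)) :
    IsWeaklyLaskerian R (ModuleExt R N X i) := by
  let m := LinearMap.lsmul R X x
  let F : ModuleExt R N X i →ₗ[R] ModuleExt R N (LinearMap.range m) i :=
    (Abelian.Ext.mk₀ (ModuleCat.ofHom m.rangeRestrict)).postcompOfLinear R _ (add_zero i)
  let G : ModuleExt R N (LinearMap.range m) i →ₗ[R] ModuleExt R N X i :=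
    (Abelian.Ext.mk₀ (ModuleCat.ofHom (LinearMap.range m).subtype)).postcompOfLinear R _
      (add_zero i)
  -- Multiplication by `x` on `Ext` is zero, and it is induced by `X → x X → X`.
  have hGF (y) : F y ∈ LinearMap.ker G := by
    have hcomp : ModuleCat.ofHom m.rangeRestrict ≫ ModuleCat.ofHom (LinearMap.range m).subtype =
        x • 𝟙 (ModuleCat.of R X) := rfl
    change (y.comp (Abelian.Ext.mk₀ _) (add_zero i)).comp (Abelian.Ext.mk₀ _) (add_zero i) = 0
    rw [Abelian.Ext.comp_assoc_of_third_deg_zero, Abelian.Ext.mk₀_comp_mk₀, hcomp,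
      Abelian.Ext.mk₀_smul, Abelian.Ext.comp_smul, Abelian.Ext.comp_mk₀_id]
    exact Module.mem_annihilator.1 (annihilator_le_annihilator_moduleExt i hx) y
  have hkerG : IsWeaklyLaskerian R (LinearMap.ker G) :=
    .ker_postcompOfLinear (shortExact_subtype_mkQ (LinearMap.range m)) hcoker
  refine .of_exact (g := F.codRestrict (LinearMap.ker G) hGF)
    (f := (Abelian.Ext.mk₀ (ModuleCat.ofHom (LinearMap.ker m).subtype)).postcompOfLinear R _
      (add_zero i)) ?_ hker hkerG
  rw [LinearMap.exact_iff, LinearMap.ker_codRestrict, ← LinearMap.exact_iff]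
  exact (ShortComplex.ab_exact_iff_function_exact _).1
    (Abelian.Ext.covariant_sequence_exact₂' _ (shortExact_subtype_rangeRestrict m) i)

theorem annihilator_lt_annihilator_ker_lsmul {x : R} (hx : x ∉ Module.annihilator R X) :
    Module.annihilator R X <
      Module.annihilator R (LinearMap.ker (LinearMap.lsmul R X x)) := by
  refine (LinearMap.annihilator_le_of_injective _ (Submodule.subtype_injective _)).lt_of_not_ge
    fun hle => hx (hle (Module.mem_annihilator.2 ?_))
  rintro ⟨y, hy⟩
  exact Subtype.ext hy

theorem finite_localizedModule_of_mem_annihilator {S : Submonoid R} {x : R}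
    (hx : x ∈ Module.annihilator R X)
    (hfin : Module.Finite (Localization S)
      (LocalizedModule S (X ⧸ LinearMap.range (LinearMap.lsmul R X x)))) :
    Module.Finite (Localization S) (LocalizedModule S X) := by
  have hrange : LinearMap.range (LinearMap.lsmul R X x) = ⊥ :=
    LinearMap.range_eq_bot.2 (LinearMap.ext (Module.mem_annihilator.1 hx))
  exact finite_localizedModule_of_surjective
    (f := (Submodule.quotEquivOfEqBot _ hrange).toLinearMap) (LinearEquiv.surjective _)

variable [IsNoetherianRing R]

theorem IsPowTorsion.moduleExt_isWeaklyLaskerian_of_ker (hX : IsPowTorsion 𝔞 X) {x : R}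
    (hx : x ∈ 𝔞)
    (hfin : Module.Finite (Localization (largePrimesCompl 𝔞)) (LocalizedModule
      (largePrimesCompl 𝔞) (X ⧸ LinearMap.range (LinearMap.lsmul R X x))))
    (h₀ : IsWeaklyLaskerian R (ModuleExt R (R ⧸ 𝔞) X 0))
    (h₁ : IsWeaklyLaskerian R (ModuleExt R (R ⧸ 𝔞) X 1))
    (hker : ∀ i, IsWeaklyLaskerian R
      (ModuleExt R (R ⧸ 𝔞) (LinearMap.ker (LinearMap.lsmul R X x)) i)) (i : ℕ) :
    IsWeaklyLaskerian R (ModuleExt R (R ⧸ 𝔞) X i) := by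
  let m := LinearMap.lsmul R X x
  have hrange₁ : IsWeaklyLaskerian R (ModuleExt R (R ⧸ 𝔞) (LinearMap.range m) 1) :=
    .covariantExt₃ (shortExact_subtype_rangeRestrict m) h₁ (hker 2)
  have hcoker₀ : IsWeaklyLaskerian R (ModuleExt R (R ⧸ 𝔞) (X ⧸ LinearMap.range m) 0) :=
    .covariantExt₃ (shortExact_subtype_mkQ (LinearMap.range m)) h₀ hrange₁
  have hcoker : IsWeaklyLaskerian R (X ⧸ LinearMap.range m) :=
    (hX.of_surjective (Submodule.mkQ_surjective _)).isWeaklyLaskerian_of_finite_localizedModule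
      hfin hcoker₀
  exact moduleExt_isWeaklyLaskerian_of_ker_of_coker (by rwa [Ideal.annihilator_quotient]) (hker i)
    fun j _ => moduleExt_isWeaklyLaskerian hcoker j

/- Noetherian induction on the annihilator: the element `x` for which `(X / x X)_S` is finite either
kills `X`, or the annihilator of `ker (x : X → X)` is strictly larger than that of `X`. -/
theorem IsPowTorsion.moduleExt_isWeaklyLaskerian (hdim : ringKrullDim (R ⧸ 𝔞) ≤ 1)
    (hX : IsPowTorsion 𝔞 X) (h₀ : IsWeaklyLaskerian R (ModuleExt R (R ⧸ 𝔞) X 0))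
    (h₁ : IsWeaklyLaskerian R (ModuleExt R (R ⧸ 𝔞) X 1)) (i : ℕ) :
    IsWeaklyLaskerian R (ModuleExt R (R ⧸ 𝔞) X i) := by
  induction hI : Module.annihilator R X using WellFoundedGT.induction generalizing X i with
  | ind I ih =>
  have := (h₀.of_linearEquiv (extZeroEquivTorsionBySet 𝔞 X)).finite_localizedModule hdim
    (Submodule.torsionBySet_isTorsionBySet _)
  obtain ⟨x, hx, hfin⟩ := hX.exists_mem_finite_localizedModule_quotient hdim
  by_cases hxX : x ∈ Module.annihilator R X
  · exact _root_.moduleExt_isWeaklyLaskerian (hX.isWeaklyLaskerian_of_finite_localizedModule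
      (finite_localizedModule_of_mem_annihilator hxX hfin) h₀) i
  · have hS := shortExact_subtype_rangeRestrict (LinearMap.lsmul R X x)
    have hrange₀ := IsWeaklyLaskerian.covariantExt₁ (i := 0)
      (shortExact_subtype_mkQ (LinearMap.range (LinearMap.lsmul R X x))) h₀ (by omega)
    refine hX.moduleExt_isWeaklyLaskerian_of_ker hx hfin h₀ h₁ (fun i => ?_) i
    refine ih _ (hI ▸ annihilator_lt_annihilator_ker_lsmul hxX)
      (hX.of_injective (Submodule.subtype_injective _)) ?_ ?_ i rfl
    · exact .covariantExt₁ hS h₀ (by omega)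
    · exact .covariantExt₁ hS h₁ (by rintro _ ⟨⟩; exact hrange₀)

end TorsionModules

/-! ### Injective modules and power torsion -/

section PowTorsion

variable {R}
variable {X : Type u} [AddCommGroup X] [Module R X] {𝔞 : Ideal R}

/-- The submodule `Γ_𝔞(X)` of elements killed by some power of `𝔞`. -/
def powTorsion (𝔞 : Ideal R) (X : Type*) [AddCommGroup X] [Module R X] : Submodule R X where
  carrier := {x | ∃ n : ℕ, ∀ r ∈ 𝔞 ^ n, r • x = 0}
  zero_mem' := ⟨0, fun r _ => smul_zero r⟩
  add_mem' := by
    rintro x y ⟨n, hn⟩ ⟨m, hm⟩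
    refine ⟨n + m, fun r hr => ?_⟩
    rw [smul_add, hn r (Ideal.pow_le_pow_right (Nat.le_add_right n m) hr),
      hm r (Ideal.pow_le_pow_right (Nat.le_add_left m n) hr), add_zero]
  smul_mem' := by
    rintro c x ⟨n, hn⟩
    exact ⟨n, fun r hr => by rw [smul_comm, hn r hr, smul_zero]⟩

theorem isPowTorsion_powTorsion : IsPowTorsion 𝔞 (powTorsion 𝔞 X) := by
  rintro ⟨x, n, hn⟩
  exact ⟨n, fun r hr => Subtype.ext (hn r hr)⟩

theorem torsionBySet_pow_le_powTorsion (n : ℕ) :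
    Submodule.torsionBySet R X ((𝔞 ^ n : Ideal R) : Set R) ≤ powTorsion 𝔞 X :=
  fun _ hx => ⟨n, fun r hr => (Submodule.mem_torsionBySet_iff _ _).1 hx ⟨r, hr⟩⟩

theorem IsPowTorsion.exists_pow_le_annihilator [Module.Finite R X] (hX : IsPowTorsion 𝔞 X) :
    ∃ n, 𝔞 ^ n ≤ Module.annihilator R X := by
  obtain ⟨s, hs⟩ := Module.Finite.fg_top (R := R) (M := X)
  choose n hn using hX
  refine ⟨s.sup n, fun r hr => ?_⟩
  rw [← Submodule.annihilator_top, ← hs, Submodule.mem_annihilator_span]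
  exact fun x => hn x r (Ideal.pow_le_pow_right (Finset.le_sup x.2) hr)

theorem exists_injective_module (X : Type u) [AddCommGroup X] [Module R X] :
    ∃ (Q : Type u) (_ : AddCommGroup Q) (_ : Module R Q) (f : X →ₗ[R] Q),
      Injective (ModuleCat.of R Q) ∧ Function.Injective f :=
  ⟨(Injective.under (C := ModuleCat.{u} R) (ModuleCat.of R X) : ModuleCat.{u} R),
    inferInstance, inferInstance, (Injective.ι (ModuleCat.of R X)).hom,
    Injective.injective_under (ModuleCat.of R X), (ModuleCat.mono_iff_injective _).1 inferInstance⟩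

variable [IsNoetherianRing R]

theorem powTorsion_quotient_powTorsion : powTorsion 𝔞 (X ⧸ powTorsion 𝔞 X) = ⊥ := by
  refine (Submodule.eq_bot_iff _).2 fun y hy => ?_
  obtain ⟨n, hn⟩ := hy
  obtain ⟨x, rfl⟩ := Submodule.mkQ_surjective _ y
  have hle : 𝔞 ^ n • Submodule.span R {x} ≤ powTorsion 𝔞 X := by
    refine Submodule.smul_le.2 fun r hr z hz => ?_
    obtain ⟨c, rfl⟩ := Submodule.mem_span_singleton.1 hz
    rw [smul_comm]
    refine Submodule.smul_mem _ c ((Submodule.Quotient.mk_eq_zero _).1 ?_)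
    exact hn r hr
  have : Module.Finite R ↥(𝔞 ^ n • Submodule.span R {x}) :=
    .of_fg (.smul (IsNoetherian.noetherian (𝔞 ^ n)) (Submodule.fg_span_singleton x))
  obtain ⟨k, hk⟩ := (isPowTorsion_powTorsion.of_injective
    (Submodule.inclusion_injective hle)).exists_pow_le_annihilator
  refine (Submodule.Quotient.mk_eq_zero _).2 ⟨k + n, fun r hr => ?_⟩
  have hmul : 𝔞 ^ (k + n) ≤ Ideal.torsionOf R X x := by
    refine (pow_add 𝔞 k n).trans_le (Ideal.mul_le.2 fun s hs t ht => ?_)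
    have := Module.mem_annihilator.1 (hk hs)
      ⟨t • x, Submodule.smul_mem_smul ht (Submodule.mem_span_singleton_self x)⟩
    rw [Ideal.mem_torsionOf_iff, mul_smul]
    exact congrArg Subtype.val this
  exact hmul hr

theorem IsPowTorsion.exists_comap_pow_le_ker (hX : IsPowTorsion 𝔞 X) {I : Ideal R}
    (g : I →ₗ[R] X) : ∃ n, Submodule.comap I.subtype (𝔞 ^ n) ≤ LinearMap.ker g := by
  obtain ⟨k, hk⟩ := (hX.of_injective
    (Submodule.subtype_injective (LinearMap.range g))).exists_pow_le_annihilator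
  obtain ⟨c, hc⟩ := Ideal.exists_pow_inf_eq_pow_smul 𝔞 (I : Submodule R R)
  have hker : 𝔞 ^ k • (⊤ : Submodule R I) ≤ LinearMap.ker g :=
    Submodule.smul_le.2 fun r hr y _ => by
      rw [LinearMap.mem_ker, map_smul]
      exact congrArg Subtype.val (Module.mem_annihilator.1 (hk hr) ⟨g y, y, rfl⟩)
  refine ⟨c + k, fun y hy => hker ?_⟩
  have hy' : (y : R) ∈ 𝔞 ^ (c + k) • (⊤ : Submodule R R) ⊓ I := ⟨by simpa using hy, y.2⟩
  rw [hc _ (Nat.le_add_right c k), Nat.add_sub_cancel_left] at hy'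
  have hsmul : (y : R) ∈ Submodule.map I.subtype (𝔞 ^ k • ⊤) := by
    rw [Submodule.map_smul'', Submodule.map_subtype_top]
    exact Submodule.smul_mono le_rfl inf_le_right hy'
  obtain ⟨z, hz, hzy⟩ := hsmul
  rwa [← Subtype.ext hzy]

theorem injective_powTorsion [hX : Injective (ModuleCat.of R X)] :
    Injective (ModuleCat.of R (powTorsion 𝔞 X)) := by
  have hX : Module.Injective R X := Module.injective_module_of_injective_object R X
  suffices Module.Injective R (powTorsion 𝔞 X) from
    Module.injective_object_of_injective_module R _
  refine Module.Baer.injective fun I g => ?_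
  obtain ⟨n, hn⟩ := isPowTorsion_powTorsion.exists_comap_pow_le_ker g
  let J : Submodule R I := Submodule.comap I.subtype (𝔞 ^ n)
  let ι : (I ⧸ J) →ₗ[R] (R ⧸ 𝔞 ^ n) := Submodule.mapQ J (𝔞 ^ n) I.subtype le_rfl
  have hι : Function.Injective ι := by
    rw [← LinearMap.ker_eq_bot, Submodule.ker_mapQ]
    exact Submodule.mkQ_map_self J
  let g' : (I ⧸ J) →ₗ[R] X := (powTorsion 𝔞 X).subtype.comp (J.liftQ g hn)
  obtain ⟨h, hh⟩ := hX.out ι hι g'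
  have he : h 1 ∈ powTorsion 𝔞 X :=
    torsionBySet_pow_le_powTorsion n (quotientHomEquivTorsionBySet (𝔞 ^ n) X h).2
  refine ⟨LinearMap.toSpanSingleton R _ ⟨h 1, he⟩, fun x hx => Subtype.ext ?_⟩
  calc x • h 1 = h (x • 1) := (map_smul h x 1).symm
    _ = g ⟨x, hx⟩ := by
      rw [Algebra.smul_def, mul_one]
      exact hh (Submodule.Quotient.mk ⟨x, hx⟩)

theorem injective_quotient_powTorsion [Injective (ModuleCat.of R X)] :
    Injective (ModuleCat.of R (X ⧸ powTorsion 𝔞 X)) := by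
  have : Injective (ModuleCat.of R (powTorsion 𝔞 X)) := injective_powTorsion
  let σ := (shortExact_subtype_mkQ (powTorsion 𝔞 X)).splittingOfInjective
  exact Retract.injective ⟨σ.s, _, σ.s_g⟩

theorem IsPowTorsion.exists_injective (hX : IsPowTorsion 𝔞 X) :
    ∃ (Q : Type u) (_ : AddCommGroup Q) (_ : Module R Q) (f : X →ₗ[R] Q),
      Injective (ModuleCat.of R Q) ∧ Function.Injective f ∧ IsPowTorsion 𝔞 Q := by
  obtain ⟨Q, _, _, ι, _, hι⟩ := exists_injective_module (R := R) X
  refine ⟨powTorsion 𝔞 Q, inferInstance, inferInstance, ι.codRestrict _ fun x => ?_,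
    injective_powTorsion, fun x y hxy => hι (congrArg Subtype.val hxy), isPowTorsion_powTorsion⟩
  obtain ⟨n, hn⟩ := hX x
  exact ⟨n, fun r hr => by rw [← map_smul, hn r hr, map_zero]⟩

theorem exists_injective_of_powTorsion_eq_bot (hX : powTorsion 𝔞 X = ⊥) :
    ∃ (Q : Type u) (_ : AddCommGroup Q) (_ : Module R Q) (f : X →ₗ[R] Q),
      Injective (ModuleCat.of R Q) ∧ Function.Injective f ∧ powTorsion 𝔞 Q = ⊥ := by
  obtain ⟨Q, _, _, ι, _, hι⟩ := exists_injective_module (R := R) X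
  refine ⟨Q ⧸ powTorsion 𝔞 Q, inferInstance, inferInstance, (Submodule.mkQ _).comp ι,
    injective_quotient_powTorsion, (injective_iff_map_eq_zero _).2 fun x hx => ?_,
    powTorsion_quotient_powTorsion⟩
  obtain ⟨n, hn⟩ := (Submodule.Quotient.mk_eq_zero _).1 hx
  rw [← Submodule.mem_bot R, ← hX]
  exact ⟨n, fun r hr => hι (by rw [map_smul, hn r hr, map_zero])⟩

end PowTorsion

/-! ### Direct limits of Ext -/

section DirectLimits

variable {R}
variable {ι : Type*} [Preorder ι] [DecidableEq ι] [IsDirectedOrder ι] [Nonempty ι]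
  {F F' : ι → Type*} [∀ n, AddCommGroup (F n)] [∀ n, Module R (F n)]
  [∀ n, AddCommGroup (F' n)] [∀ n, Module R (F' n)]
  {f : ∀ i j, i ≤ j → F i →ₗ[R] F j} {f' : ∀ i j, i ≤ j → F' i →ₗ[R] F' j}

theorem directLimit_lift_bijective {L : Type*} [AddCommGroup L] [Module R L]
    {g : ∀ n, F n →ₗ[R] L} (hg : ∀ i j h x, g j (f i j h x) = g i x)
    (hinj : ∀ n x, g n x = 0 → ∃ m h, f n m h x = 0) (hsurj : ∀ y, ∃ n x, g n x = y) :
    Function.Bijective (Module.DirectLimit.lift R ι F f g hg) := by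
  refine ⟨(injective_iff_map_eq_zero _).2 fun z hz => ?_, fun y => ?_⟩
  · obtain ⟨n, x, rfl⟩ := Module.DirectLimit.exists_of z
    rw [Module.DirectLimit.lift_of] at hz
    obtain ⟨m, hnm, hx⟩ := hinj n x hz
    rw [← Module.DirectLimit.of_f (hij := hnm), hx, map_zero]
  · obtain ⟨n, x, rfl⟩ := hsurj y
    exact ⟨Module.DirectLimit.of R ι F f n x, Module.DirectLimit.lift_of _ _ _⟩

theorem directLimit_map_bijective [DirectedSystem F' (f' · · ·)] {φ : ∀ n, F n →ₗ[R] F' n}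
    (hφ : ∀ i j h, φ j ∘ₗ f i j h = f' i j h ∘ₗ φ i)
    (hinj : ∀ n x, φ n x = 0 → ∃ m h, f n m h x = 0)
    (hsurj : ∀ n y, ∃ m h x, φ m x = f' n m h y) :
    Function.Bijective (Module.DirectLimit.map φ hφ) := by
  refine ⟨(injective_iff_map_eq_zero _).2 fun z hz => ?_, fun y => ?_⟩
  · obtain ⟨n, x, rfl⟩ := Module.DirectLimit.exists_of z
    rw [Module.DirectLimit.map_apply_of] at hz
    obtain ⟨m, hnm, hm⟩ := Module.DirectLimit.of.zero_exact hz
    obtain ⟨k, hmk, hk⟩ := hinj m (f n m hnm x) ((LinearMap.congr_fun (hφ n m hnm) x).trans hm)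
    rw [← Module.DirectLimit.of_f (hij := hnm), ← Module.DirectLimit.of_f (hij := hmk), hk,
      map_zero]
  · obtain ⟨n, y, rfl⟩ := Module.DirectLimit.exists_of y
    obtain ⟨m, hnm, x, hx⟩ := hsurj n y
    refine ⟨Module.DirectLimit.of R ι F f m x, ?_⟩
    rw [Module.DirectLimit.map_apply_of, hx, Module.DirectLimit.of_f]

end DirectLimits

section DirectLimitExt

variable {R}
variable {X Y : Type u} [AddCommGroup X] [Module R X] [AddCommGroup Y] [Module R Y]
  {𝔞 : Ideal R} {n m i j k : ℕ}

/-- The map `Ext^i(R/𝔞^n, X) → Ext^i(R/𝔞^m, X)` induced by the projection `R/𝔞^m → R/𝔞^n`. -/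
noncomputable def extTransition (𝔞 : Ideal R) (X : Type u) [AddCommGroup X] [Module R X]
    (i n m : ℕ) (h : n ≤ m) :
    ModuleExt R (R ⧸ 𝔞 ^ n) X i →ₗ[R] ModuleExt R (R ⧸ 𝔞 ^ m) X i :=
  (Abelian.Ext.mk₀ (ModuleCat.ofHom (Submodule.factor (Ideal.pow_le_pow_right h)))).precompOfLinear
    R (ModuleCat.of R X) (zero_add i)

theorem extTransition_apply (h : n ≤ m) (e : ModuleExt R (R ⧸ 𝔞 ^ n) X i) :
    extTransition 𝔞 X i n m h e = (Abelian.Ext.mk₀ (ModuleCat.ofHom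
      (Submodule.factor (Ideal.pow_le_pow_right h)))).comp e (zero_add i) :=
  rfl

instance directedSystem_extTransition :
    DirectedSystem (fun n => ModuleExt R (R ⧸ 𝔞 ^ n) X i) (extTransition 𝔞 X i · · ·) where
  map_self n e := by
    have hid : ModuleCat.ofHom (Submodule.factor (Ideal.pow_le_pow_right (I := 𝔞) (le_refl n))) =
        𝟙 _ := by
      ext
      rfl
    rw [extTransition_apply, hid, Abelian.Ext.mk₀_id_comp]
  map_map k m n hnm hmk e := by
    have hcomp : ModuleCat.ofHom (Submodule.factor (Ideal.pow_le_pow_right (I := 𝔞) hmk)) ≫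
        ModuleCat.ofHom (Submodule.factor (Ideal.pow_le_pow_right hnm)) =
        ModuleCat.ofHom (Submodule.factor (Ideal.pow_le_pow_right (hnm.trans hmk))) := by
      ext
      rfl
    rw [extTransition_apply, extTransition_apply, extTransition_apply,
      Abelian.Ext.mk₀_comp_mk₀_assoc, hcomp]

theorem extTransition_comp (h : n ≤ m) (c : ModuleExt R (R ⧸ 𝔞 ^ n) X i) (d : ModuleExt R X Y j)
    (hk : i + j = k) :
    extTransition 𝔞 Y k n m h (c.comp d hk) = (extTransition 𝔞 X i n m h c).comp d hk := by
  rw [extTransition_apply, extTransition_apply, Abelian.Ext.comp_assoc]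
  lia

/-- The direct limit of `Ext^i(R/𝔞^n, X)` over `n`, a concrete model of the local cohomology
module `H^i_𝔞(X)`. -/
abbrev DirectLimitExt (𝔞 : Ideal R) (X : Type u) [AddCommGroup X] [Module R X] (i : ℕ) : Type u :=
  Module.DirectLimit (fun n => ModuleExt R (R ⧸ 𝔞 ^ n) X i) (extTransition 𝔞 X i)

theorem isPowTorsion_directLimitExt : IsPowTorsion 𝔞 (DirectLimitExt 𝔞 X i) := by
  intro z
  obtain ⟨n, x, rfl⟩ := Module.DirectLimit.exists_of z
  refine ⟨n, fun r hr => ?_⟩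
  have hr : r ∈ Module.annihilator R (R ⧸ 𝔞 ^ n) := by rwa [Ideal.annihilator_quotient]
  rw [← map_smul, Module.mem_annihilator.1 (annihilator_le_annihilator_moduleExt i hr), map_zero]

/-- Evaluation at `1`, from `Ext^0(R/𝔞^n, X) = Hom(R/𝔞^n, X)` to `Γ_𝔞(X)`. -/
noncomputable def extZeroToPowTorsion (𝔞 : Ideal R) (X : Type u) [AddCommGroup X] [Module R X]
    (n : ℕ) : ModuleExt R (R ⧸ 𝔞 ^ n) X 0 →ₗ[R] powTorsion 𝔞 X :=
  Submodule.inclusion (torsionBySet_pow_le_powTorsion n) ∘ₗ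
    (extZeroEquivTorsionBySet (𝔞 ^ n) X).toLinearMap

theorem exists_eq_mk₀ (e : ModuleExt R X Y 0) :
    ∃ f : X →ₗ[R] Y, e = Abelian.Ext.mk₀ (ModuleCat.ofHom f) :=
  ⟨(Abelian.Ext.homEquiv₀ e).hom, (Abelian.Ext.homEquiv₀.symm_apply_apply e).symm⟩

theorem extTransition_mk₀ (h : n ≤ m) (f : (R ⧸ 𝔞 ^ n) →ₗ[R] X) :
    extTransition 𝔞 X 0 n m h (Abelian.Ext.mk₀ (ModuleCat.ofHom f)) =
      Abelian.Ext.mk₀ (ModuleCat.ofHom (f ∘ₗ Submodule.factor (Ideal.pow_le_pow_right h))) := by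
  rw [extTransition_apply, Abelian.Ext.mk₀_comp_mk₀, ModuleCat.ofHom_comp]

theorem extZeroToPowTorsion_extTransition (n m : ℕ) (h : n ≤ m)
    (e : ModuleExt R (R ⧸ 𝔞 ^ n) X 0) :
    extZeroToPowTorsion 𝔞 X m (extTransition 𝔞 X 0 n m h e) = extZeroToPowTorsion 𝔞 X n e := by
  obtain ⟨f, rfl⟩ := exists_eq_mk₀ e
  rw [extTransition_mk₀]
  exact Subtype.ext ((extZeroEquivTorsionBySet_mk₀ _).trans (extZeroEquivTorsionBySet_mk₀ f).symm)

theorem extZeroToPowTorsion_injective (n : ℕ) :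
    Function.Injective (extZeroToPowTorsion 𝔞 X n) :=
  (Submodule.inclusion_injective (torsionBySet_pow_le_powTorsion n)).comp
    (extZeroEquivTorsionBySet (𝔞 ^ n) X).injective

theorem exists_extZeroToPowTorsion_eq (y : powTorsion 𝔞 X) :
    ∃ n e, extZeroToPowTorsion 𝔞 X n e = y := by
  obtain ⟨y, n, hn⟩ := y
  let z : Submodule.torsionBySet R X ((𝔞 ^ n : Ideal R) : Set R) :=
    ⟨y, (Submodule.mem_torsionBySet_iff _ _).2 fun r => hn r r.2⟩
  refine ⟨n, (extZeroEquivTorsionBySet (𝔞 ^ n) X).symm z, ?_⟩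
  exact congrArg (Submodule.inclusion (torsionBySet_pow_le_powTorsion n))
    ((extZeroEquivTorsionBySet (𝔞 ^ n) X).apply_symm_apply z)

/-- In degree `0` the direct limit is `Γ_𝔞(X)`. -/
noncomputable def directLimitExtZeroEquiv (𝔞 : Ideal R) (X : Type u) [AddCommGroup X]
    [Module R X] : DirectLimitExt 𝔞 X 0 ≃ₗ[R] powTorsion 𝔞 X :=
  .ofBijective _ <| directLimit_lift_bijective extZeroToPowTorsion_extTransition
    (fun n e he => ⟨n, le_rfl, by
      rw [(map_eq_zero_iff _ (extZeroToPowTorsion_injective n)).1 he, map_zero]⟩)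
    exists_extZeroToPowTorsion_eq

end DirectLimitExt

section DimensionShift

variable {R}
variable {𝔞 : Ideal R} {S : ShortComplex (ModuleCat.{u} R)} {i n : ℕ}

theorem IsPowTorsion.exists_extTransition_eq_comp_mk₀ {Q Z : Type u} [AddCommGroup Q] [Module R Q]
    [AddCommGroup Z] [Module R Z] (hQ : IsPowTorsion 𝔞 Q) {g : Q →ₗ[R] Z}
    (hg : Function.Surjective g) (c : ModuleExt R (R ⧸ 𝔞 ^ n) Z 0) :
    ∃ (m : ℕ) (h : n ≤ m) (d : ModuleExt R (R ⧸ 𝔞 ^ m) Q 0),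
      extTransition 𝔞 Z 0 n m h c = d.comp (Abelian.Ext.mk₀ (ModuleCat.ofHom g)) (add_zero 0) := by
  obtain ⟨c, rfl⟩ := exists_eq_mk₀ c
  obtain ⟨q, hq⟩ := hg (c 1)
  obtain ⟨m, hm⟩ := hQ q
  have hq' : q ∈ Submodule.torsionBySet R Q ((𝔞 ^ (n + m) : Ideal R) : Set R) :=
    (Submodule.mem_torsionBySet_iff _ _).2 fun r =>
      hm r (Ideal.pow_le_pow_right (Nat.le_add_left m n) r.2)
  let d : (R ⧸ 𝔞 ^ (n + m)) →ₗ[R] Q := (quotientHomEquivTorsionBySet _ Q).symm ⟨q, hq'⟩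
  refine ⟨n + m, Nat.le_add_right n m, Abelian.Ext.mk₀ (ModuleCat.ofHom d), ?_⟩
  rw [extTransition_mk₀, Abelian.Ext.mk₀_comp_mk₀, ← ModuleCat.ofHom_comp]
  congr 2
  ext
  change c 1 = g ((1 : R) • q)
  rw [one_smul, hq]

theorem extTransition_comp_extClass_eq_zero (hS : S.ShortExact) {m : ℕ} (h : n ≤ m)
    {c : ModuleExt R (R ⧸ 𝔞 ^ n) S.X₃ i} {d : ModuleExt R (R ⧸ 𝔞 ^ m) S.X₂ i}
    (hd : extTransition 𝔞 S.X₃ i n m h c = d.comp (Abelian.Ext.mk₀ S.g) (add_zero i)) :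
    extTransition 𝔞 S.X₁ (i + 1) n m h (c.comp hS.extClass rfl) = 0 := by
  rw [extTransition_comp, hd, Abelian.Ext.comp_assoc_of_second_deg_zero, hS.comp_extClass,
    Abelian.Ext.comp_zero]

theorem IsPowTorsion.exists_extTransition_eq_zero [IsNoetherianRing R] {X : Type u}
    [AddCommGroup X] [Module R X] (hX : IsPowTorsion 𝔞 X)
    (e : ModuleExt R (R ⧸ 𝔞 ^ n) X (i + 1)) :
    ∃ (m : ℕ) (h : n ≤ m), extTransition 𝔞 X (i + 1) n m h e = 0 := by
  induction i generalizing X with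
  | zero =>
    obtain ⟨Q, _, _, f, _, hf, hQ⟩ := hX.exists_injective
    have hS := shortExact_mkQ_range hf
    obtain ⟨c, rfl⟩ := Abelian.Ext.covariant_sequence_exact₁ _ hS e
      (Abelian.Ext.eq_zero_of_injective _) (zero_add 1)
    obtain ⟨m, h, d, hd⟩ :=
      hQ.exists_extTransition_eq_comp_mk₀ (LinearMap.range f).mkQ_surjective c
    exact ⟨m, h, extTransition_comp_extClass_eq_zero hS h hd⟩
  | succ i ih =>
    obtain ⟨Q, _, _, f, _, hf, hQ⟩ := hX.exists_injective
    have hS := shortExact_mkQ_range hf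
    obtain ⟨c, rfl⟩ := Abelian.Ext.covariant_sequence_exact₁ _ hS e
      (Abelian.Ext.eq_zero_of_injective _) rfl
    obtain ⟨m, h, hm⟩ := ih (hQ.of_surjective (LinearMap.range f).mkQ_surjective) c
    exact ⟨m, h, extTransition_comp_extClass_eq_zero hS h
      (hm.trans (Abelian.Ext.zero_comp ..).symm)⟩

/-- Killing an `𝔞`-power torsion submodule does not change the direct limits in positive degree. -/
noncomputable def directLimitExtEquivOfIsPowTorsion [IsNoetherianRing R] (hS : S.ShortExact)
    (h₁ : IsPowTorsion 𝔞 S.X₁) (i : ℕ) :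
    DirectLimitExt 𝔞 S.X₂ (i + 1) ≃ₗ[R] DirectLimitExt 𝔞 S.X₃ (i + 1) :=
  .ofBijective (Module.DirectLimit.map
    (fun n => (Abelian.Ext.mk₀ S.g).postcompOfLinear R (.of R (R ⧸ 𝔞 ^ n)) (add_zero (i + 1)))
    fun _ _ h => LinearMap.ext fun c =>
      (extTransition_comp h c (Abelian.Ext.mk₀ S.g) (add_zero (i + 1))).symm) <|
  directLimit_map_bijective _
    (fun n x hx => by
      obtain ⟨y, rfl⟩ := Abelian.Ext.covariant_sequence_exact₂ _ hS x hx
      obtain ⟨m, h, hm⟩ := h₁.exists_extTransition_eq_zero y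
      exact ⟨m, h, by rw [extTransition_comp, hm, Abelian.Ext.zero_comp]⟩)
    fun n z => by
      obtain ⟨m, h, hm⟩ := h₁.exists_extTransition_eq_zero (z.comp hS.extClass rfl)
      rw [extTransition_comp] at hm
      exact ⟨m, h, Abelian.Ext.covariant_sequence_exact₃ _ hS _ rfl hm⟩

/-- The connecting map of a short exact sequence whose middle term has no `Ext`. -/
noncomputable def extClassEquiv (hS : S.ShortExact) (Y : ModuleCat.{u} R)
    (h₂ : ∀ j, Subsingleton (Abelian.Ext Y S.X₂ j)) (i : ℕ) :
    Abelian.Ext Y S.X₃ i ≃ₗ[R] Abelian.Ext Y S.X₁ (i + 1) :=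
  .ofBijective (hS.extClass.postcompOfLinear R Y rfl)
    ⟨(injective_iff_map_eq_zero _).2 fun x hx => by
      obtain ⟨y, rfl⟩ := Abelian.Ext.covariant_sequence_exact₃ _ hS x rfl hx
      rw [(h₂ i).elim y 0, Abelian.Ext.zero_comp],
    fun z => Abelian.Ext.covariant_sequence_exact₁ _ hS z ((h₂ (i + 1)).elim _ _) rfl⟩

/-- The dimension shift along a short exact sequence whose middle term has no `Ext` from `R/𝔞^n`. -/
noncomputable def directLimitExtSuccEquiv (hS : S.ShortExact)
    (h₂ : ∀ n j, Subsingleton (ModuleExt R (R ⧸ 𝔞 ^ n) S.X₂ j)) (i : ℕ) :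
    DirectLimitExt 𝔞 S.X₃ i ≃ₗ[R] DirectLimitExt 𝔞 S.X₁ (i + 1) :=
  Module.DirectLimit.congr (fun n => extClassEquiv hS _ (h₂ n) i)
    fun _ _ h => LinearMap.ext fun c => (extTransition_comp h c hS.extClass rfl).symm

end DimensionShift

/-! ### Local cohomology -/

section WeaklyLaskerianExt

variable {R}
variable {X : Type u} [AddCommGroup X] [Module R X] {𝔞 : Ideal R}

theorem subsingleton_moduleExt_zero_of_powTorsion_eq_bot (hX : powTorsion 𝔞 X = ⊥) {I : Ideal R}
    {n : ℕ} (hI : 𝔞 ^ n ≤ I) : Subsingleton (ModuleExt R (R ⧸ I) X 0) := by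
  have hbot : Submodule.torsionBySet R X (I : Set R) = ⊥ := eq_bot_iff.2 <|
    (Submodule.torsionBySet_le_torsionBySet_of_subset hI).trans
      ((torsionBySet_pow_le_powTorsion n).trans_eq hX)
  have : Subsingleton (Submodule.torsionBySet R X (I : Set R)) :=
    Submodule.subsingleton_iff_eq_bot.2 hbot
  exact (extZeroEquivTorsionBySet I X).toEquiv.subsingleton

variable [IsNoetherianRing R]

theorem moduleExt_powTorsion_isWeaklyLaskerian (hdim : ringKrullDim (R ⧸ 𝔞) ≤ 1)
    (hX : ∀ j, IsWeaklyLaskerian R (ModuleExt R (R ⧸ 𝔞) X j)) (j : ℕ) :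
    IsWeaklyLaskerian R (ModuleExt R (R ⧸ 𝔞) (powTorsion 𝔞 X) j) := by
  have hS := shortExact_subtype_mkQ (powTorsion 𝔞 X)
  have : Subsingleton (ModuleExt R (R ⧸ 𝔞) (X ⧸ powTorsion 𝔞 X) 0) :=
    subsingleton_moduleExt_zero_of_powTorsion_eq_bot powTorsion_quotient_powTorsion
      (pow_one 𝔞).le
  exact isPowTorsion_powTorsion.moduleExt_isWeaklyLaskerian hdim
    (.covariantExt₁ hS (hX 0) (by lia))
    (.covariantExt₁ hS (hX 1) (by rintro _ ⟨⟩; exact .of_subsingleton)) j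

theorem exists_directLimitExt_equiv_succ (hX : powTorsion 𝔞 X = ⊥) :
    ∃ (Z : Type u) (_ : AddCommGroup Z) (_ : Module R Z),
      (∀ j, Nonempty (ModuleExt R (R ⧸ 𝔞) Z j ≃ₗ[R] ModuleExt R (R ⧸ 𝔞) X (j + 1))) ∧
        ∀ i, Nonempty (DirectLimitExt 𝔞 Z i ≃ₗ[R] DirectLimitExt 𝔞 X (i + 1)) := by
  obtain ⟨Q, _, _, f, _, hf, hQ⟩ := exists_injective_of_powTorsion_eq_bot hX
  have hExt {I : Ideal R} {n : ℕ} (hI : 𝔞 ^ n ≤ I) :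
      ∀ j, Subsingleton (ModuleExt R (R ⧸ I) Q j)
    | 0 => subsingleton_moduleExt_zero_of_powTorsion_eq_bot hQ hI
    | j + 1 => Abelian.Ext.subsingleton_of_injective _ _ j
  have hS := shortExact_mkQ_range hf
  exact ⟨Q ⧸ LinearMap.range f, inferInstance, inferInstance,
    fun j => ⟨extClassEquiv hS _ (hExt (pow_one 𝔞).le) j⟩,
    fun i => ⟨directLimitExtSuccEquiv hS (fun n => hExt (le_refl (𝔞 ^ n))) i⟩⟩

theorem moduleExt_directLimitExt_isWeaklyLaskerian (hdim : ringKrullDim (R ⧸ 𝔞) ≤ 1)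
    (hX : ∀ j, IsWeaklyLaskerian R (ModuleExt R (R ⧸ 𝔞) X j)) (i j : ℕ) :
    IsWeaklyLaskerian R (ModuleExt R (R ⧸ 𝔞) (DirectLimitExt 𝔞 X i) j) := by
  induction i generalizing X with
  | zero =>
    exact .ext_congr_right (directLimitExtZeroEquiv 𝔞 X).symm.toModuleIso
      (moduleExt_powTorsion_isWeaklyLaskerian hdim hX j)
  | succ i ih =>
    have hS := shortExact_subtype_mkQ (powTorsion 𝔞 X)
    obtain ⟨Z, _, _, hExt, hlim⟩ := exists_directLimitExt_equiv_succ (𝔞 := 𝔞)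
      (powTorsion_quotient_powTorsion (X := X))
    have hZ (k : ℕ) : IsWeaklyLaskerian R (ModuleExt R (R ⧸ 𝔞) Z k) :=
      .of_linearEquiv (hExt k).some.symm <| .covariantExt₃ hS (hX (k + 1))
        (moduleExt_powTorsion_isWeaklyLaskerian hdim hX (k + 2))
    exact .ext_congr_right ((hlim i).some ≪≫ₗ
      (directLimitExtEquivOfIsPowTorsion hS isPowTorsion_powTorsion i).symm).toModuleIso (ih hZ)

end WeaklyLaskerianExt

section LocalCohomology

open Limits Opposite

variable {R}
variable (𝔞 : Ideal R) (i : ℕ) (M : ModuleCat.{u} R)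

theorem preservesColimitsOfShape_forget_moduleCat :
    PreservesColimitsOfShape (ℕᵒᵖ)ᵒᵖ (forget (ModuleCat.{u} R)) :=
  have : PreservesFilteredColimitsOfSize.{0, 0} (forget (ModuleCat.{u} R)) :=
    preservesFilteredColimitsOfSize_shrink.{0, u, 0, u} _
  inferInstance

/-- The direct system `n ↦ Ext^i(R/𝔞^n, M)` whose colimit defines `H^i_𝔞(M)`. -/
noncomputable abbrev localCohomologyDiagram : (ℕᵒᵖ)ᵒᵖ ⥤ ModuleCat.{u} R :=
  localCohomology.diagram (localCohomology.idealPowersDiagram 𝔞) i ⋙ (evaluation _ _).obj M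

/-- The cocone at `H^i_𝔞(M)` obtained by evaluating the colimit of functors
`H^i_𝔞 = colim Ext^i(R/𝔞^n, -)` at `M`. -/
noncomputable def localCohomologyCocone : Cocone (localCohomologyDiagram 𝔞 i M) :=
  have := localCohomology.hasColimitDiagram.{u, 0} (localCohomology.idealPowersDiagram 𝔞) i
  ((evaluation _ _).obj M).mapCocone (colimit.cocone _)

/-- Colimits of functors are computed pointwise. -/
noncomputable def isColimitLocalCohomologyCocone : IsColimit (localCohomologyCocone 𝔞 i M) :=
  have := localCohomology.hasColimitDiagram.{u, 0} (localCohomology.idealPowersDiagram 𝔞) i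
  isColimitOfPreserves _ (colimit.isColimit _)

variable {𝔞 i M}

/-- The terms of the diagram are the modules `Ext^i(R/𝔞^n, M)`. -/
noncomputable def localCohomologyDiagramObjEquiv (n : ℕ) :
    (localCohomologyDiagram 𝔞 i M).obj (op (op n)) ≃ₗ[R] ModuleExt R (R ⧸ 𝔞 ^ n) M i :=
  extModuleEquiv (ModuleCat.of R (R ⧸ 𝔞 ^ n)) M i

theorem localCohomologyDiagramObjEquiv_map {n m : ℕ} (h : n ≤ m)
    (z : (localCohomologyDiagram 𝔞 i M).obj (op (op n))) :
    localCohomologyDiagramObjEquiv m ((localCohomologyDiagram 𝔞 i M).map (homOfLE h).op.op z) =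
      extTransition 𝔞 M i n m h (localCohomologyDiagramObjEquiv n z) :=
  extModuleEquiv_naturality M i (ModuleCat.ofHom (Submodule.factor (Ideal.pow_le_pow_right h))) z

variable (c : Cocone (localCohomologyDiagram 𝔞 i M))

/-- The cocone maps, seen on `Ext^i(R/𝔞^n, M)`. -/
noncomputable def coconeExtMap (n : ℕ) : ModuleExt R (R ⧸ 𝔞 ^ n) M i →ₗ[R] c.pt :=
  (c.ι.app (op (op n))).hom ∘ₗ (localCohomologyDiagramObjEquiv n).symm.toLinearMap

theorem coconeExtMap_equiv (n : ℕ) (z : (localCohomologyDiagram 𝔞 i M).obj (op (op n))) :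
    coconeExtMap c n (localCohomologyDiagramObjEquiv n z) = c.ι.app (op (op n)) z :=
  congrArg (c.ι.app (op (op n))).hom ((localCohomologyDiagramObjEquiv n).symm_apply_apply z)

theorem coconeExtMap_extTransition (n m : ℕ) (h : n ≤ m) (x : ModuleExt R (R ⧸ 𝔞 ^ n) M i) :
    coconeExtMap c m (extTransition 𝔞 M i n m h x) = coconeExtMap c n x := by
  obtain ⟨z, rfl⟩ := (localCohomologyDiagramObjEquiv n).surjective x
  rw [← localCohomologyDiagramObjEquiv_map, coconeExtMap_equiv, coconeExtMap_equiv]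
  exact LinearMap.congr_fun (congrArg ModuleCat.Hom.hom (c.w (homOfLE h).op.op)) z

variable {c}

theorem exists_coconeExtMap_eq (hc : IsColimit c) (y : c.pt) : ∃ n x, coconeExtMap c n x = y := by
  have := preservesColimitsOfShape_forget_moduleCat (R := R)
  obtain ⟨k, z, hz⟩ := Concrete.isColimit_exists_rep _ hc y
  exact ⟨k.unop.unop, localCohomologyDiagramObjEquiv _ z, (coconeExtMap_equiv c _ z).trans hz⟩

theorem exists_extTransition_eq_zero_of_coconeExtMap_eq_zero (hc : IsColimit c) (n : ℕ)
    (x : ModuleExt R (R ⧸ 𝔞 ^ n) M i) (hx : coconeExtMap c n x = 0) :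
    ∃ (m : ℕ) (h : n ≤ m), extTransition 𝔞 M i n m h x = 0 := by
  have := preservesColimitsOfShape_forget_moduleCat (R := R)
  obtain ⟨z, rfl⟩ := (localCohomologyDiagramObjEquiv n).surjective x
  rw [coconeExtMap_equiv] at hx
  obtain ⟨k, f, g, hfg⟩ := Concrete.isColimit_exists_of_rep_eq (localCohomologyDiagram 𝔞 i M) hc
    (i := op (op n)) (j := op (op n)) z 0 (hx.trans (map_zero (c.ι.app _).hom).symm)
  refine ⟨k.unop.unop, leOfHom f.unop.unop, ?_⟩
  rw [← localCohomologyDiagramObjEquiv_map]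
  exact (congrArg _ (hfg.trans (map_zero _))).trans (map_zero _)

variable (𝔞 i M)

/-- The concrete direct limit agrees with the library's local cohomology. -/
noncomputable def directLimitExtEquivLocalCohomology :
    DirectLimitExt 𝔞 M i ≃ₗ[R] (localCohomology 𝔞 i).obj M :=
  .ofBijective _ <|
    have hc := isColimitLocalCohomologyCocone 𝔞 i M
    directLimit_lift_bijective (coconeExtMap_extTransition (localCohomologyCocone 𝔞 i M))
      (exists_extTransition_eq_zero_of_coconeExtMap_eq_zero hc) (exists_coconeExtMap_eq hc)

end LocalCohomology

theorem stmt14_general [IsNoetherianRing R] (𝔞 𝔟 : Ideal R) (hrad : 𝔟 ≤ 𝔞.radical)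
    (hdim : ringKrullDim (R ⧸ 𝔞) ≤ 1) (M : ModuleCat.{u} R)
    (h : ∀ i, IsWeaklyLaskerian R (extModule R i (ModuleCat.of R (R ⧸ 𝔟)) M)) :
    ∀ i : ℕ, IsWeaklyCofinite R 𝔞 ((localCohomology 𝔞 i).obj M) := by
  intro i
  have hsupp : Module.support R (R ⧸ 𝔞) ⊆ PrimeSpectrum.zeroLocus (𝔟 : Set R) := by
    rw [Module.support_eq_zeroLocus, Ideal.annihilator_quotient,
      ← PrimeSpectrum.zeroLocus_radical 𝔞]
    exact PrimeSpectrum.zeroLocus_anti_mono hrad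
  have h𝔟 (j : ℕ) : IsWeaklyLaskerian R (ModuleExt R (R ⧸ 𝔟) M j) :=
    .of_linearEquiv (extModuleEquiv _ M j) (h j)
  have h𝔞 (j : ℕ) : IsWeaklyLaskerian R (ModuleExt R (R ⧸ 𝔞) M j) :=
    moduleExt_isWeaklyLaskerian_of_support_subset 𝔟 h𝔟 j (R ⧸ 𝔞) hsupp
  let e := directLimitExtEquivLocalCohomology 𝔞 i M
  exact ⟨(isPowTorsion_directLimitExt.of_surjective e.surjective).support_subset,
    fun j => .of_linearEquiv (extModuleEquiv _ _ j).symm <|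
      .ext_congr_right e.toModuleIso (moduleExt_directLimitExt_isWeaklyLaskerian hdim h𝔞 i j)⟩

theorem stmt14 [IsNoetherianRing R] (𝔞 𝔟 : Ideal R) (hrad : 𝔟 ≤ 𝔞.radical)
    (hdim : ringKrullDim (R ⧸ 𝔞) = 1) (M : ModuleCat.{u} R)
    (h : IsWeaklyCofinite R 𝔟 M) :
    ∀ i : ℕ, IsWeaklyCofinite R 𝔞 ((localCohomology 𝔞 i).obj M) :=
  stmt14_general R 𝔞 𝔟 hrad hdim.le M h.2
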